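/- arXiv:2404.07587 — 2 statements merged into one kernel-verified Lean document; each statement's English description precedes it below -/
import Mathlib

section
/- Let K > 0 and J ∈ ℝ, and assume φ_{K,J} attains its minimum over [−1,1] at a unique point m* ∈ (−1,1) with φ_{K,J}''(m*) > 0. Then there exists a constant c = c(K,J) > 0 such that for all n ≥ 1, sup_{z∈ℝ} |P_{n,K,J}(W_n ≤ z) − Φ(z)| ≤ c/√n, where Φ is the standard normal distribution function. -/
/-!
The number of up-spins `k` determines the magnetization per particle `m_k = (2 k - n) / n`, and
the level weight `n.choose k * exp (n (K/3 m_k³ + J/2 m_k²))` equals `exp (-n φ(m_k) + D_k)`, where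
`D_k = s(n) - s(k) - s(n - k)` and `s(k) = log k! - k log k + k` (`levelWeight_eq_exp`). The
increments of `s` lie between `0` and `1 / (k + 1)`, so after division by
`R = exp (-n φ(m*) + D_{k₀})`, with `m_{k₀}` within `2 / n` of `m*`, the error `D_k - D_{k₀}` is
`O(|m_k - m*| + 1 / n)` in the bulk and at most `2 (1 + log n)` everywhere. No precise form of
Stirling's formula is needed, since the normalization cancels.

Taylor expansion of `φ` at `m*` together with the global bound `φ(x) - φ(m*) ≥ b (x - m*)²` then
shows (`pointwise_estimate`) that the normalized level weights, seen as a step function with steps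
of length `2 / n`, differ from `exp (-n φ''(m*) x² / 2)` by at most
`C / √n * (1 + u⁵) exp (-a u²)`, `u = √n |x|`. In the variable `t = √(n φ''(m*)) x` the right-hand
side has integral `O(1 / √n)` and the steps have length `O(1 / √n)`, so partial sums of the weights
approximate the normal distribution function uniformly (`lattice_sum_cdf`). The limit `z → ∞`
gives the same approximation for the partition function, and the quotient of the two gives the
probability (`ratio_bound`). Finitely many small `n` are absorbed in the constant.
-/

open MeasureTheory ProbabilityTheory Real Filter

noncomputable section

/-- The spin value `±1` associated with a Boolean. -/
def spin (b : Bool) : ℝ := if b then 1 else -1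

/-- Total magnetization `S_n(x) = ∑ i, x_i`. -/
def totalMag (n : ℕ) (x : Fin n → Bool) : ℝ := ∑ i, spin (x i)

/-- Magnetization per particle `m_n(x) = S_n(x)/n`. -/
def magPP (n : ℕ) (x : Fin n → Bool) : ℝ := totalMag n x / n

/-- Boltzmann–Gibbs weight of a configuration in the cubic Curie–Weiss model
(the reference factor `2^{-n}` is constant and cancels upon normalization). -/
def cubicWeight (n : ℕ) (K J : ℝ) (x : Fin n → Bool) : ℝ :=
  Real.exp (n * (K / 3 * (magPP n x) ^ 3 + J / 2 * (magPP n x) ^ 2))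

/-- The cubic Curie–Weiss Boltzmann–Gibbs probability measure `P_{n,K,J}`. -/
def cubicMeasure (n : ℕ) (K J : ℝ) : Measure (Fin n → Bool) :=
  (∑ x : Fin n → Bool, ENNReal.ofReal (cubicWeight n K J x))⁻¹ •
    ∑ x : Fin n → Bool, ENNReal.ofReal (cubicWeight n K J x) • Measure.dirac x

/-- The probability of an event under `P_{n,K,J}`, as a real number. -/
def cubicProb (n : ℕ) (K J : ℝ) (s : Set (Fin n → Bool)) : ℝ :=
  (cubicMeasure n K J s).toReal

/-- The binary relative entropy `I(m)`. -/
def binEnt (m : ℝ) : ℝ :=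
  (1 - m) / 2 * Real.log ((1 - m) / 2) + (1 + m) / 2 * Real.log ((1 + m) / 2)

/-- The function `φ_{K,J}(x) = I(x) − (K/3)x³ − (J/2)x²`. -/
def phiKJ (K J : ℝ) (x : ℝ) : ℝ := binEnt x - K / 3 * x ^ 3 - J / 2 * x ^ 2

/-- The standard normal cumulative distribution function. -/
def stdNormalCDF (z : ℝ) : ℝ :=
  (ProbabilityTheory.gaussianReal 0 1 (Set.Iic z)).toReal

end

/-! ### Binomial coefficients and the entropy -/

/-- `log k! - k log k + k`, the part of `log k!` beyond its leading Stirling asymptotics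
(with the convention `0 log 0 = 0`). It grows like `(1/2) log k`, but only the size of its
increments is needed. -/
noncomputable def stirlingCorr (k : ℕ) : ℝ := Real.log (k.factorial) - k * Real.log k + k

lemma stirlingCorr_zero : stirlingCorr 0 = 0 := by simp [stirlingCorr]

lemma stirlingCorr_step (k : ℕ) :
    0 ≤ stirlingCorr (k + 1) - stirlingCorr k ∧
      stirlingCorr (k + 1) - stirlingCorr k ≤ 1 / ((k : ℝ) + 1) := by
  rcases Nat.eq_zero_or_pos k with rfl | hk
  · simp [stirlingCorr]
  have hk' : (0 : ℝ) < k := by exact_mod_cast hk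
  have hfac : (0 : ℝ) < (k.factorial : ℝ) := by exact_mod_cast k.factorial_pos
  have key : stirlingCorr (k + 1) - stirlingCorr k
      = 1 - k * (Real.log (k + 1) - Real.log k) := by
    unfold stirlingCorr
    rw [Nat.factorial_succ]
    push_cast
    rw [Real.log_mul (by positivity) hfac.ne']
    ring
  have hlog : Real.log (k + 1) - Real.log k = Real.log (((k : ℝ) + 1) / k) := by
    rw [Real.log_div (by positivity) hk'.ne']
  have h1 : Real.log (((k : ℝ) + 1) / k) ≤ 1 / k := by
    have := Real.log_le_sub_one_of_pos (x := ((k : ℝ) + 1) / k) (by positivity)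
    have e : ((k : ℝ) + 1) / k - 1 = 1 / k := by field_simp; ring
    linarith
  have h2 : 1 / ((k : ℝ) + 1) ≤ Real.log (((k : ℝ) + 1) / k) := by
    have := Real.one_sub_inv_le_log_of_pos (x := ((k : ℝ) + 1) / k) (by positivity)
    have e : 1 - (((k : ℝ) + 1) / k)⁻¹ = 1 / ((k : ℝ) + 1) := by field_simp; ring
    linarith
  rw [key, hlog]
  constructor
  · have := mul_le_mul_of_nonneg_left h1 hk'.le
    have e : (k : ℝ) * (1 / k) = 1 := by field_simp
    linarith
  · have := mul_le_mul_of_nonneg_left h2 hk'.le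
    have e : 1 - (k : ℝ) * (1 / ((k : ℝ) + 1)) = 1 / ((k : ℝ) + 1) := by field_simp; ring
    linarith

lemma stirlingCorr_mono : Monotone stirlingCorr :=
  monotone_nat_of_le_succ fun k => by linarith [(stirlingCorr_step k).1]

lemma stirlingCorr_nonneg (k : ℕ) : 0 ≤ stirlingCorr k := by
  rw [← stirlingCorr_zero]; exact stirlingCorr_mono (Nat.zero_le k)

lemma stirlingCorr_le_log (n : ℕ) (hn : 1 ≤ n) : stirlingCorr n ≤ 1 + Real.log n := by
  induction n, hn using Nat.le_induction with
  | base => simp [stirlingCorr]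
  | succ k hk ih =>
    have hk' : (0 : ℝ) < k := by exact_mod_cast hk
    have h := (stirlingCorr_step k).2
    have h2 : 1 / ((k : ℝ) + 1) ≤ Real.log (((k : ℝ) + 1) / k) := by
      have := Real.one_sub_inv_le_log_of_pos (x := ((k : ℝ) + 1) / k) (by positivity)
      have e : 1 - (((k : ℝ) + 1) / k)⁻¹ = 1 / ((k : ℝ) + 1) := by field_simp; ring
      linarith
    rw [Real.log_div (by positivity) hk'.ne'] at h2
    push_cast
    linarith

lemma stirlingCorr_lipschitz_le (L : ℝ) (hL : 0 < L) (j k : ℕ) (hjk : j ≤ k) (hj : L ≤ j) :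
    |stirlingCorr k - stirlingCorr j| ≤ |(k : ℝ) - j| / L := by
  induction k, hjk using Nat.le_induction with
  | base => simp
  | succ k hk ih =>
    have hk' : (j : ℝ) ≤ k := by exact_mod_cast hk
    have h := stirlingCorr_step k
    have h3 : 1 / ((k : ℝ) + 1) ≤ 1 / L := one_div_le_one_div_of_le hL (by linarith)
    have m1 := stirlingCorr_mono hk
    have m2 := stirlingCorr_mono (hk.trans (Nat.le_succ k))
    rw [abs_of_nonneg (by linarith), abs_of_nonneg (by linarith)] at ih
    push_cast
    rw [abs_of_nonneg (by simpa using m2), abs_of_nonneg (by linarith)]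
    have e : ((k : ℝ) + 1 - j) / L = (k - j) / L + 1 / L := by ring
    rw [e]
    linarith [h.2]

/-- Away from `0` the Stirling correction varies slowly: its increments beyond `L` are at most
`1 / L`. -/
lemma stirlingCorr_lipschitz (L : ℝ) (hL : 0 < L) (j k : ℕ) (hj : L ≤ j) (hk : L ≤ k) :
    |stirlingCorr k - stirlingCorr j| ≤ |(k : ℝ) - j| / L := by
  rcases le_total j k with h | h
  · exact stirlingCorr_lipschitz_le L hL j k h hj
  · rw [abs_sub_comm, abs_sub_comm (k : ℝ)]
    exact stirlingCorr_lipschitz_le L hL k j h hk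

/-- The entropy asymptotics of `n.choose k`, with the error expressed exactly through
`stirlingCorr`. At `k = 0` and `k = n` the convention `Real.log 0 = 0` gives the right value. -/
lemma log_choose_eq (n k : ℕ) (hn : 1 ≤ n) (hk : k ≤ n) :
    Real.log (n.choose k) = -(n * binEnt ((2 * k - n) / n)) +
      (stirlingCorr n - stirlingCorr k - stirlingCorr (n - k)) := by
  have hn' : (0 : ℝ) < n := by exact_mod_cast hn
  have e1 : (1 - (2 * (k : ℝ) - n) / n) / 2 = ((n - k : ℕ) : ℝ) / n := by
    rw [Nat.cast_sub hk]; field_simp; ring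
  have e2 : (1 + (2 * (k : ℝ) - n) / n) / 2 = (k : ℝ) / n := by
    field_simp; ring
  have hl : ∀ j : ℕ, (n : ℝ) * ((j : ℝ) / n * Real.log ((j : ℝ) / n))
      = j * Real.log j - j * Real.log n := by
    intro j
    rcases Nat.eq_zero_or_pos j with rfl | hj
    · simp
    have hj' : (0 : ℝ) < j := by exact_mod_cast hj
    rw [Real.log_div hj'.ne' hn'.ne']
    field_simp
  have hc : (n.factorial : ℝ) = n.choose k * k.factorial * (n - k).factorial := by
    exact_mod_cast (Nat.choose_mul_factorial_mul_factorial hk).symm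
  have p1 : (n.choose k : ℝ) ≠ 0 := by exact_mod_cast (Nat.choose_pos hk).ne'
  have p2 : (k.factorial : ℝ) ≠ 0 := by exact_mod_cast k.factorial_ne_zero
  have p3 : ((n - k).factorial : ℝ) ≠ 0 := by exact_mod_cast (n - k).factorial_ne_zero
  have hlog : Real.log (n.factorial) = Real.log (n.choose k) + Real.log k.factorial
      + Real.log (n - k).factorial := by
    rw [hc, Real.log_mul (mul_ne_zero p1 p2) p3, Real.log_mul p1 p2]
  unfold binEnt
  rw [e1, e2, mul_add, hl, hl]
  unfold stirlingCorr
  rw [hlog, Nat.cast_sub hk]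
  ring

/-! ### The free energy function near and away from its minimizer -/

lemma hasDerivAt_binEnt {x : ℝ} (h1 : -1 < x) (h2 : x < 1) :
    HasDerivAt binEnt ((Real.log (1 + x) - Real.log (1 - x)) / 2) x := by
  have a1 : HasDerivAt (fun m : ℝ => (1 - m) / 2) (-1 / 2) x :=
    ((hasDerivAt_id x).const_sub 1).div_const 2
  have a2 : HasDerivAt (fun m : ℝ => (1 + m) / 2) (1 / 2) x :=
    ((hasDerivAt_id x).const_add 1).div_const 2
  have p1 : (1 - x) / 2 ≠ 0 := by linarith
  have p2 : (1 + x) / 2 ≠ 0 := by linarith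
  have q1 : 1 - x ≠ 0 := by linarith
  have q2 : 1 + x ≠ 0 := by linarith
  have b := (a1.mul (a1.log p1)).add (a2.mul (a2.log p2))
  have : binEnt = (fun m : ℝ => (1 - m) / 2) * (fun m : ℝ => Real.log ((1 - m) / 2))
      + (fun m : ℝ => (1 + m) / 2) * (fun m : ℝ => Real.log ((1 + m) / 2)) := by
    funext m; rfl
  rw [this]
  refine b.congr_deriv ?_
  rw [Real.log_div q1 two_ne_zero, Real.log_div q2 two_ne_zero]
  field_simp
  ring

/-- The first derivative of `phiKJ K J` on `(-1, 1)`. -/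
noncomputable def phi1 (K J x : ℝ) : ℝ := (Real.log (1 + x) - Real.log (1 - x)) / 2 - K * x ^ 2 - J * x

/-- The second derivative of `phiKJ K J` on `(-1, 1)`. -/
noncomputable def phi2 (K J x : ℝ) : ℝ := 1 / (1 - x ^ 2) - 2 * K * x - J

lemma hasDerivAt_phiKJ (K J : ℝ) {x : ℝ} (h1 : -1 < x) (h2 : x < 1) :
    HasDerivAt (phiKJ K J) (phi1 K J x) x := by
  have b := ((hasDerivAt_binEnt h1 h2).sub ((hasDerivAt_pow 3 x).const_mul (K / 3))).sub
    ((hasDerivAt_pow 2 x).const_mul (J / 2))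
  refine b.congr_deriv ?_
  unfold phi1
  norm_num
  ring

lemma hasDerivAt_phi1 (K J : ℝ) {x : ℝ} (h1 : -1 < x) (h2 : x < 1) :
    HasDerivAt (phi1 K J) (phi2 K J x) x := by
  have q1 : 1 - x ≠ 0 := by linarith
  have q2 : 1 + x ≠ 0 := by linarith
  have q3 : 1 - x ^ 2 ≠ 0 := by
    have : 1 - x ^ 2 = (1 - x) * (1 + x) := by ring
    rw [this]; exact mul_ne_zero q1 q2
  have b := (((((hasDerivAt_id x).const_add 1).log q2).sub
    (((hasDerivAt_id x).const_sub 1).log q1)).div_const 2).sub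
      ((hasDerivAt_pow 2 x).const_mul K) |>.sub ((hasDerivAt_id x).const_mul J)
  refine b.congr_deriv ?_
  unfold phi2
  simp only [id]
  field_simp
  ring

lemma iteratedDeriv_two_phiKJ (K J : ℝ) {x : ℝ} (h1 : -1 < x) (h2 : x < 1) :
    iteratedDeriv 2 (phiKJ K J) x = phi2 K J x := by
  rw [iteratedDeriv_succ, iteratedDeriv_one]
  have : deriv (phiKJ K J) =ᶠ[nhds x] phi1 K J := by
    filter_upwards [Ioo_mem_nhds h1 h2] with y hy
    exact (hasDerivAt_phiKJ K J hy.1 hy.2).deriv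
  rw [this.deriv_eq]
  exact (hasDerivAt_phi1 K J h1 h2).deriv

lemma continuous_phiKJ (K J : ℝ) : Continuous (phiKJ K J) := by
  unfold phiKJ binEnt
  have h := Real.continuous_mul_log
  have h1 : Continuous fun m : ℝ => (1 - m) / 2 * Real.log ((1 - m) / 2) :=
    h.comp (by fun_prop : Continuous fun m : ℝ => (1 - m) / 2)
  have h2 : Continuous fun m : ℝ => (1 + m) / 2 * Real.log ((1 + m) / 2) :=
    h.comp (by fun_prop : Continuous fun m : ℝ => (1 + m) / 2)
  fun_prop

/-- Second-order Taylor expansion at a critical point with cubic remainder: `φ''` is Lipschitz at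
`m`, and the mean value inequality is applied twice. -/
lemma phi_taylor (K J m : ℝ) (hm : m ∈ Set.Ioo (-1 : ℝ) 1) (hcrit : phi1 K J m = 0) :
    ∃ M > 0, ∃ r > 0, ∀ x, |x - m| ≤ r →
      |phiKJ K J x - phiKJ K J m - phi2 K J m / 2 * (x - m) ^ 2| ≤ M * |x - m| ^ 3 := by
  have q3 : 1 - m ^ 2 ≠ 0 := by nlinarith [hm.1, hm.2]
  have hd : DifferentiableAt ℝ (phi2 K J) m := by
    unfold phi2
    fun_prop (disch := assumption)
  obtain ⟨M, hM, hO⟩ := (hd.isBigO_sub).exists_pos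
  rw [Asymptotics.IsBigOWith] at hO
  obtain ⟨r, hr, hball⟩ := Metric.eventually_nhds_iff.1
    (hO.and (Ioo_mem_nhds hm.1 hm.2))
  refine ⟨M, hM, r / 2, by linarith, fun x hx => ?_⟩
  set ρ := |x - m| with hρ
  have hρ0 : 0 ≤ ρ := abs_nonneg _
  -- everything takes place on the closed interval of radius `ρ` around `m`
  have hS : Convex ℝ (Set.Icc (m - ρ) (m + ρ)) := convex_Icc _ _
  have habs : ∀ y ∈ Set.Icc (m - ρ) (m + ρ), |y - m| ≤ ρ := fun y hy =>
    abs_le.2 ⟨by linarith [hy.1], by linarith [hy.2]⟩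
  have hmS : m ∈ Set.Icc (m - ρ) (m + ρ) := ⟨by linarith, by linarith⟩
  have hin : ∀ y ∈ Set.Icc (m - ρ) (m + ρ),
      |phi2 K J y - phi2 K J m| ≤ M * |y - m| ∧ y ∈ Set.Ioo (-1 : ℝ) 1 := by
    intro y hy
    have := hball (y := y) (by rw [Real.dist_eq]; linarith [habs y hy])
    simpa using this
  have hg1 : ∀ y ∈ Set.Icc (m - ρ) (m + ρ),
      |phi1 K J y - phi2 K J m * (y - m)| ≤ M * ρ * ρ := by
    intro y hy
    have := hS.norm_image_sub_le_of_norm_hasDerivWithin_le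
      (f := fun y => phi1 K J y - phi2 K J m * (y - m))
      (f' := fun y => phi2 K J y - phi2 K J m) (C := M * ρ)
      (fun z hz => by
        have h := (hasDerivAt_phi1 K J (hin z hz).2.1 (hin z hz).2.2).sub
          (((hasDerivAt_id z).sub_const m).const_mul (phi2 K J m))
        exact (h.congr_deriv (by simp)).hasDerivWithinAt)
      (fun z hz => (hin z hz).1.trans (mul_le_mul_of_nonneg_left (habs z hz) hM.le)) hmS hy
    simp only [hcrit, sub_self, mul_zero, sub_zero, Real.norm_eq_abs] at this
    exact this.trans (mul_le_mul_of_nonneg_left (habs y hy) (by positivity))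
  have hxS : x ∈ Set.Icc (m - ρ) (m + ρ) := by
    have := abs_le.1 hρ.ge
    exact ⟨by linarith [this.1], by linarith [this.2]⟩
  have := hS.norm_image_sub_le_of_norm_hasDerivWithin_le
      (f := fun y => phiKJ K J y - phi2 K J m / 2 * (y - m) ^ 2)
      (f' := fun y => phi1 K J y - phi2 K J m * (y - m)) (C := M * ρ * ρ)
      (fun z hz => by
        have h := (hasDerivAt_phiKJ K J (hin z hz).2.1 (hin z hz).2.2).sub
          ((((hasDerivAt_id z).sub_const m).pow 2).const_mul (phi2 K J m / 2))
        refine (h.congr_deriv ?_).hasDerivWithinAt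
        simp
        ring)
      (fun z hz => hg1 z hz) hmS hxS
  simp only [sub_self, Real.norm_eq_abs] at this
  have e : phiKJ K J x - phi2 K J m / 2 * (x - m) ^ 2 - (phiKJ K J m - phi2 K J m / 2 * 0 ^ 2)
      = phiKJ K J x - phiKJ K J m - phi2 K J m / 2 * (x - m) ^ 2 := by ring
  rw [e] at this
  calc _ ≤ _ := this
    _ = M * ρ ^ 3 := by rw [← hρ]; ring

/-- At a unique nondegenerate minimizer, `φ` grows at least quadratically on all of `[-1, 1]`: near
`m` by the Taylor expansion, away from `m` by compactness. -/
lemma phi_quadratic_lower (K J m : ℝ) (hm : m ∈ Set.Ioo (-1 : ℝ) 1)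
    (hcrit : phi1 K J m = 0) (hpos : 0 < phi2 K J m)
    (hmin : ∀ y ∈ Set.Icc (-1 : ℝ) 1, phiKJ K J m ≤ phiKJ K J y)
    (huniq : ∀ y ∈ Set.Icc (-1 : ℝ) 1, phiKJ K J y = phiKJ K J m → y = m) :
    ∃ b > 0, ∀ x ∈ Set.Icc (-1 : ℝ) 1, b * (x - m) ^ 2 ≤ phiKJ K J x - phiKJ K J m := by
  obtain ⟨M, hM, r, hr, hT⟩ := phi_taylor K J m hm hcrit
  set lam := phi2 K J m with hlam
  set r0 := min r (lam / (4 * M)) with hr0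
  have hr0pos : 0 < r0 := lt_min hr (by positivity)
  have hfar : ∃ e > 0, ∀ x ∈ Set.Icc (-1 : ℝ) 1, r0 ≤ |x - m| →
      e ≤ phiKJ K J x - phiKJ K J m := by
    set T : Set ℝ := Set.Icc (-1 : ℝ) 1 ∩ {x | r0 ≤ |x - m|} with hTdef
    have hc : IsCompact T := isCompact_Icc.inter_right
      (isClosed_le continuous_const (by fun_prop))
    rcases T.eq_empty_or_nonempty with he | hne
    · refine ⟨1, one_pos, fun x hx hx2 => ?_⟩
      have : x ∈ T := ⟨hx, hx2⟩
      simp [he] at this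
    · obtain ⟨y, hy, hyle⟩ := hc.exists_isMinOn hne (continuous_phiKJ K J).continuousOn
      refine ⟨phiKJ K J y - phiKJ K J m, ?_, fun x hx hx2 => ?_⟩
      · have h1 := hmin y hy.1
        have h2 : phiKJ K J y ≠ phiKJ K J m := by
          intro h
          have h3 := huniq y hy.1 h
          have h4 : r0 ≤ |y - m| := hy.2
          rw [h3, sub_self, abs_zero] at h4
          linarith
        exact sub_pos.2 (lt_of_le_of_ne h1 (Ne.symm h2))
      · have : phiKJ K J y ≤ phiKJ K J x := hyle ⟨hx, hx2⟩
        linarith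
  obtain ⟨e, he, hfar⟩ := hfar
  refine ⟨min (lam / 4) (e / 4), lt_min (by positivity) (by positivity), fun x hx => ?_⟩
  rcases le_or_gt r0 |x - m| with h | h
  · have h1 := hfar x hx h
    have h2 : (x - m) ^ 2 ≤ 4 := by nlinarith [hx.1, hx.2, hm.1, hm.2]
    have h3 : min (lam / 4) (e / 4) ≤ e / 4 := min_le_right _ _
    nlinarith [sq_nonneg (x - m)]
  · have h1 := (abs_le.1 (hT x (h.le.trans (min_le_left _ _)))).1
    have h2 : M * |x - m| ^ 3 ≤ lam / 4 * (x - m) ^ 2 := by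
      have h4 : M * |x - m| ≤ lam / 4 := by
        have : |x - m| ≤ lam / (4 * M) := h.le.trans (min_le_right _ _)
        rw [le_div_iff₀ (by positivity)] at this
        linarith
      have : M * |x - m| ^ 3 = (M * |x - m|) * (x - m) ^ 2 := by
        rw [← sq_abs (x - m)]; ring
      rw [this]
      exact mul_le_mul_of_nonneg_right h4 (sq_nonneg _)
    have h3 : min (lam / 4) (e / 4) * (x - m) ^ 2 ≤ lam / 4 * (x - m) ^ 2 :=
      mul_le_mul_of_nonneg_right (min_le_left _ _) (sq_nonneg _)
    linarith

/-! ### Reduction to the number of up-spins -/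

/-- A configuration with `k` spins up has total magnetization `2 k - n`, and there are
`n.choose k` of them. -/
lemma sum_config (n : ℕ) (f : ℝ → ℝ) :
    ∑ x : Fin n → Bool, f (totalMag n x)
      = ∑ k ∈ Finset.range (n + 1), (n.choose k : ℝ) * f (2 * k - n) := by
  have h := Finset.sum_powerset_apply_card (fun k : ℕ => f (2 * k - n))
    (x := (Finset.univ : Finset (Fin n)))
  simp only [Finset.card_univ, Fintype.card_fin, nsmul_eq_mul, Finset.powerset_univ] at h
  rw [← h]
  refine Finset.sum_nbij' (fun x => Finset.univ.filter fun i => x i = true)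
    (fun s i => decide (i ∈ s)) (by simp) (by simp) (by intro x _; ext i; simp)
    (by intro s _; ext i; simp) ?_
  intro x _
  congr 1
  unfold totalMag
  have : ∀ i, spin (x i) = 2 * (if x i = true then 1 else 0) - 1 := by
    intro i; unfold spin; split_ifs <;> norm_num
  simp_rw [this]
  rw [Finset.sum_sub_distrib, ← Finset.mul_sum]
  simp

/-- The total weight of the configurations with exactly `k` spins up. -/
noncomputable def levelWeight (n : ℕ) (K J : ℝ) (k : ℕ) : ℝ :=
  n.choose k * Real.exp (n * (K / 3 * ((2 * k - n) / n : ℝ) ^ 3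
    + J / 2 * ((2 * k - n) / n : ℝ) ^ 2))

lemma levelWeight_nonneg (n : ℕ) (K J : ℝ) (k : ℕ) : 0 ≤ levelWeight n K J k := by
  unfold levelWeight; positivity

lemma levelWeight_pos (n : ℕ) (K J : ℝ) (k : ℕ) (hk : k ≤ n) : 0 < levelWeight n K J k := by
  have : (0 : ℝ) < n.choose k := by exact_mod_cast Nat.choose_pos hk
  unfold levelWeight; positivity

lemma cubicProb_eq (n : ℕ) (K J : ℝ) (p : ℝ → Prop) [DecidablePred p] :
    cubicProb n K J {x | p (totalMag n x)}
      = (∑ k ∈ (Finset.range (n + 1)).filter (fun k : ℕ => p (2 * (k : ℝ) - n)),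
          levelWeight n K J k)
        / ∑ k ∈ Finset.range (n + 1), levelWeight n K J k := by
  have hw : ∀ x : Fin n → Bool, 0 ≤ cubicWeight n K J x := fun x => (Real.exp_pos _).le
  unfold cubicProb cubicMeasure
  rw [Measure.smul_apply, Measure.finsetSum_apply, smul_eq_mul, ENNReal.toReal_mul,
    ENNReal.toReal_inv, ← ENNReal.ofReal_sum_of_nonneg (fun x _ => hw x),
    ENNReal.toReal_ofReal (Finset.sum_nonneg fun x _ => hw x), div_eq_inv_mul]
  congr 1
  · congr 1
    exact sum_config n fun s => Real.exp (n * (K / 3 * (s / n) ^ 3 + J / 2 * (s / n) ^ 2))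
  · have h1 : ∀ x : Fin n → Bool,
        (ENNReal.ofReal (cubicWeight n K J x) • Measure.dirac x) {x | p (totalMag n x)}
          = ENNReal.ofReal (if p (totalMag n x) then cubicWeight n K J x else 0) := by
      intro x
      rw [Measure.smul_apply, Measure.dirac_apply' _ (Set.toFinite _).measurableSet]
      by_cases h : p (totalMag n x) <;> simp [h]
    simp_rw [h1]
    rw [← ENNReal.ofReal_sum_of_nonneg (fun x _ => by split_ifs <;> simp [hw]),
      ENNReal.toReal_ofReal (Finset.sum_nonneg fun x _ => by split_ifs <;> simp [hw])]
    have h2 := sum_config n fun s => if p s then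
      Real.exp (n * (K / 3 * (s / n) ^ 3 + J / 2 * (s / n) ^ 2)) else 0
    rw [Finset.sum_filter]
    refine h2.trans (Finset.sum_congr rfl fun k _ => ?_)
    by_cases h : p (2 * (k : ℝ) - n) <;> simp [h, levelWeight]

/-! ### Comparing lattice sums with the normal distribution function -/

lemma stdNormalCDF_eq_integral (z : ℝ) :
    stdNormalCDF z = ∫ t, (Set.Iic z).indicator (gaussianPDFReal 0 1) t := by
  unfold stdNormalCDF
  rw [gaussianReal_apply_eq_integral 0 one_ne_zero, ENNReal.toReal_ofReal,
    integral_indicator measurableSet_Iic]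
  exact integral_nonneg fun t => gaussianPDFReal_nonneg 0 1 t

lemma gaussianPDFReal_std (t : ℝ) :
    gaussianPDFReal 0 1 t = (√(2 * π))⁻¹ * Real.exp (-t ^ 2 / 2) := by
  simp [gaussianPDFReal_def]

lemma inv_sqrt_two_pi_le_one : (√(2 * π))⁻¹ ≤ 1 := by
  apply inv_le_one_of_one_le₀
  rw [Real.one_le_sqrt]
  linarith [Real.pi_gt_three]

lemma gaussianPDFReal_std_le_one (t : ℝ) : gaussianPDFReal 0 1 t ≤ 1 := by
  rw [gaussianPDFReal_std]
  have h2 : Real.exp (-t ^ 2 / 2) ≤ 1 := Real.exp_le_one_iff.2 (by nlinarith [sq_nonneg t])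
  calc _ ≤ (1 : ℝ) * 1 := mul_le_mul inv_sqrt_two_pi_le_one h2 (Real.exp_pos _).le zero_le_one
    _ = 1 := one_mul 1

/-- If the step function with value `v k` on the `k`-th cell `[t0 + k δ, t0 + (k + 1) δ)` (and `0`
off the cells) differs from the normal density by at most `H`, then the lattice sums up to `z`
differ from the distribution function at `z` by at most `∫ H + δ`. The extra `δ` comes from the
cell that contains `z`. -/
lemma lattice_sum_cdf (n : ℕ) (t0 δ : ℝ) (hδ : 0 < δ) (v : ℕ → ℝ) (H : ℝ → ℝ)
    (hH : Integrable H)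
    (hin : ∀ k ≤ n, ∀ t ∈ Set.Ico (t0 + k * δ) (t0 + k * δ + δ),
      |v k - gaussianPDFReal 0 1 t| ≤ H t)
    (hout : ∀ t, t ∉ Set.Ico t0 (t0 + n * δ + δ) → gaussianPDFReal 0 1 t ≤ H t) (z : ℝ) :
    |δ * ∑ k ∈ Finset.range (n + 1) with ((t0 + (k : ℕ) * δ : ℝ) ≤ z), v k - stdNormalCDF z|
      ≤ (∫ t, H t) + δ := by
  set S := Finset.filter (fun k : ℕ => t0 + (k : ℝ) * δ ≤ z) (Finset.range (n + 1)) with hS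
  set I : ℕ → Set ℝ := fun k => Set.Ico (t0 + k * δ) (t0 + k * δ + δ) with hI
  set V : ℝ → ℝ := fun t => ∑ k ∈ S, (I k).indicator (fun _ => v k) t with hV
  set g := gaussianPDFReal 0 1 with hg
  have hidx : ∀ (j k : ℕ) (t : ℝ), t ∈ I j → t ∈ I k → j ≤ k := by
    intro j k t hj hk
    by_contra hlt
    push Not at hlt
    have : (k : ℝ) + 1 ≤ j := by exact_mod_cast hlt
    have h1 := hj.1
    have h2 := hk.2
    nlinarith
  have hIint : ∀ k, Integrable ((I k).indicator fun _ : ℝ => v k) := fun k =>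
    (integrable_indicator_iff measurableSet_Ico).2
      (integrableOn_const (by simp))
  have hVint : Integrable V := integrable_finsetSum _ fun k _ => hIint k
  have hgint : Integrable ((Set.Iic z).indicator g) :=
    (integrable_gaussianPDFReal 0 1).indicator measurableSet_Iic
  have hVsum : ∫ t, V t = δ * ∑ k ∈ S, v k := by
    rw [integral_finsetSum _ fun k _ => hIint k, Finset.mul_sum]
    refine Finset.sum_congr rfl fun k _ => ?_
    rw [integral_indicator measurableSet_Ico]
    simp [hδ.le]
  have hVmem : ∀ k ∈ S, ∀ t ∈ I k, V t = v k := by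
    intro k hk t ht
    simp only [hV]
    rw [Finset.sum_eq_single k]
    · simp [ht]
    · intro j _ hjk
      refine Set.indicator_of_notMem (fun hj => hjk ?_) _
      exact le_antisymm (hidx j k t hj ht) (hidx k j t ht hj)
    · exact fun h => absurd hk h
  have hVout : ∀ t, (∀ k ∈ S, t ∉ I k) → V t = 0 := fun t ht =>
    Finset.sum_eq_zero fun k hk => Set.indicator_of_notMem (ht k hk) _
  have hcover : ∀ t ∈ Set.Ico t0 (t0 + n * δ + δ), ∃ k ≤ n, t ∈ I k := by
    intro t ht
    have h0 : 0 ≤ (t - t0) / δ := div_nonneg (by linarith [ht.1]) hδ.le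
    refine ⟨⌊(t - t0) / δ⌋₊, ?_, ?_, ?_⟩
    · have : (t - t0) / δ < n + 1 := by
        rw [div_lt_iff₀ hδ]; linarith [ht.2]
      have h2 : ⌊(t - t0) / δ⌋₊ < n + 1 := (Nat.floor_lt h0).2 (by exact_mod_cast this)
      omega
    · have := Nat.floor_le h0
      rw [le_div_iff₀ hδ] at this
      linarith
    · have := Nat.lt_floor_add_one ((t - t0) / δ)
      rw [div_lt_iff₀ hδ] at this
      linarith
  have hH0 : ∀ t, 0 ≤ H t := by
    intro t
    by_cases ht : t ∈ Set.Ico t0 (t0 + n * δ + δ)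
    · obtain ⟨k, hk, htk⟩ := hcover t ht
      exact (abs_nonneg _).trans (hin k hk t htk)
    · exact (gaussianPDFReal_nonneg 0 1 t).trans (hout t ht)
  -- the indicator of `[z, z + δ)` accounts for the cell that straddles `z`
  have hpt : ∀ t, |V t - (Set.Iic z).indicator g t|
      ≤ H t + (Set.Ico z (z + δ)).indicator (fun _ => (1 : ℝ)) t := by
    intro t
    have hind : 0 ≤ (Set.Ico z (z + δ)).indicator (fun _ => (1 : ℝ)) t :=
      Set.indicator_nonneg (fun _ _ => zero_le_one) t
    by_cases htz : t ≤ z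
    · rw [Set.indicator_of_mem (show t ∈ Set.Iic z from htz)]
      refine le_trans ?_ (le_add_of_nonneg_right hind)
      by_cases ht : t ∈ Set.Ico t0 (t0 + n * δ + δ)
      · obtain ⟨k, hk, htk⟩ := hcover t ht
        have hkS : k ∈ S := by
          simp only [hS, Finset.mem_filter, Finset.mem_range]
          exact ⟨by omega, htk.1.trans htz⟩
        rw [hVmem k hkS t htk]
        exact hin k hk t htk
      · rw [hVout t ?_, zero_sub, abs_neg, abs_of_nonneg (gaussianPDFReal_nonneg 0 1 t)]
        · exact hout t ht
        · intro k hk htk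
          simp only [hS, Finset.mem_filter, Finset.mem_range] at hk
          have hkn : (k : ℝ) ≤ n := by exact_mod_cast (by omega : k ≤ n)
          have hk0 : (0 : ℝ) ≤ k := k.cast_nonneg
          have := htk.1
          have := htk.2
          exact ht ⟨by nlinarith, by nlinarith⟩
    · rw [Set.indicator_of_notMem (show t ∉ Set.Iic z from htz), sub_zero]
      push Not at htz
      by_cases hex : ∃ k ∈ S, t ∈ I k
      · obtain ⟨k, hk, htk⟩ := hex
        rw [hVmem k hk t htk]
        simp only [hS, Finset.mem_filter, Finset.mem_range] at hk
        have := htk.2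
        rw [Set.indicator_of_mem (show t ∈ Set.Ico z (z + δ) from ⟨htz.le, by linarith [hk.2]⟩)]
        have h1 := hin k (by omega) t htk
        have h2 := gaussianPDFReal_std_le_one t
        have h3 := gaussianPDFReal_nonneg 0 1 t
        have h4 := abs_le.1 h1
        have h5 := hH0 t
        exact abs_le.2 ⟨by linarith, by linarith⟩
      · push Not at hex
        rw [hVout t hex, abs_zero]
        exact add_nonneg (hH0 t) hind
  have hbump : Integrable ((Set.Ico z (z + δ)).indicator fun _ : ℝ => (1 : ℝ)) :=
    (integrable_indicator_iff measurableSet_Ico).2 (integrableOn_const (by simp))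
  rw [stdNormalCDF_eq_integral, ← hVsum, ← integral_sub hVint hgint]
  calc |∫ t, (V t - (Set.Iic z).indicator g t)|
      ≤ ∫ t, |V t - (Set.Iic z).indicator g t| := abs_integral_le_integral_abs
    _ ≤ ∫ t, (H t + (Set.Ico z (z + δ)).indicator (fun _ => (1 : ℝ)) t) :=
        integral_mono (hVint.sub hgint).abs (hH.add hbump) hpt
    _ = (∫ t, H t) + δ := by
        rw [integral_add hH hbump, integral_indicator measurableSet_Ico]
        simp [hδ.le]

/-! ### Estimates at a single lattice point

Below, `y` is the deviation of the magnetization per particle from the minimizer at a lattice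
point, `x` a point within the lattice spacing `2 / n` of it, `ψ` the excess of `φ` at `y`, and
`E` the Stirling error. -/

lemma abs_exp_sub_exp_le (p q : ℝ) :
    |Real.exp p - Real.exp q| ≤ |p - q| * (Real.exp p + Real.exp q) := by
  have key : ∀ p q : ℝ, Real.exp p - Real.exp q ≤ |p - q| * (Real.exp p + Real.exp q) := by
    intro p q
    have h1 : 1 + (q - p) ≤ Real.exp (q - p) := by linarith [Real.add_one_le_exp (q - p)]
    have h2 : Real.exp q = Real.exp p * Real.exp (q - p) := by
      rw [← Real.exp_add]; congr 1; ring
    have h3 : p - q ≤ |p - q| := le_abs_self _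
    have hp := Real.exp_pos p
    have hq := Real.exp_pos q
    have h4 : Real.exp p - Real.exp q ≤ Real.exp p * (p - q) := by
      rw [h2]; nlinarith
    nlinarith [abs_nonneg (p - q)]
  rw [abs_le]
  constructor
  · have := key q p
    rw [abs_sub_comm] at this
    linarith
  · exact key p q

lemma le_one_add_pow_five {u : ℝ} (hu : 0 ≤ u) : u ≤ 1 + u ^ 5 ∧ u ^ 3 ≤ 1 + u ^ 5 := by
  rcases le_total u 1 with h | h
  · have h3 : u ^ 3 ≤ 1 := pow_le_one₀ hu h
    have h5 : 0 ≤ u ^ 5 := by positivity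
    exact ⟨by linarith, by linarith⟩
  · have h1 : u ^ 1 ≤ u ^ 5 := pow_le_pow_right₀ h (by norm_num)
    have h3 : u ^ 3 ≤ u ^ 5 := pow_le_pow_right₀ h (by norm_num)
    exact ⟨by linarith, by linarith⟩

lemma shifted_square_bound {n x y : ℝ} (hn : 1 ≤ n) (hxy : |y - x| ≤ 2 / n) :
    n * x ^ 2 / 2 - 4 ≤ n * y ^ 2 := by
  have h1 : (y - x) ^ 2 ≤ (2 / n) ^ 2 := by
    rw [← sq_abs (y - x)]; exact pow_le_pow_left₀ (abs_nonneg _) hxy 2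
  have h2 : n * (2 / n) ^ 2 = 4 / n := by field_simp; norm_num
  have h3 : 4 / n ≤ 4 := div_le_self (by norm_num) hn
  have h4 : x ^ 2 ≤ 2 * y ^ 2 + 2 * (y - x) ^ 2 := by nlinarith [sq_nonneg (2 * y - x)]
  have h5 : n * x ^ 2 ≤ n * (2 * y ^ 2 + 2 * (y - x) ^ 2) :=
    mul_le_mul_of_nonneg_left h4 (by linarith)
  have h6 : n * (y - x) ^ 2 ≤ n * (2 / n) ^ 2 := mul_le_mul_of_nonneg_left h1 (by linarith)
  linarith

lemma near_exponent_bound {n lam M A x y ψ E : ℝ} (hn : 1 ≤ n) (hlam : 0 < lam) (hM : 0 < M)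
    (hA : 0 < A) (hxy : |y - x| ≤ 2 / n)
    (hT : |ψ - lam / 2 * y ^ 2| ≤ M * |y| ^ 3) (hE : |E| ≤ A * (|y| + 2 / n)) :
    |(-(n * ψ) + E) - (-(n * lam * x ^ 2 / 2))|
      ≤ (36 * M + 4 * lam + 5 * A) * (1 + (√n * |x|) ^ 5) / √n := by
  set s := √n with hs
  have hs1 : 1 ≤ s := by rw [hs, Real.one_le_sqrt]; exact hn
  have hs0 : 0 < s := by linarith
  have hns : n = s ^ 2 := (Real.sq_sqrt (by linarith)).symm
  set ξ := |x| with hξ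
  have hξ0 : 0 ≤ ξ := abs_nonneg x
  set u := s * ξ with hu
  have hu0 : 0 ≤ u := by positivity
  have hξu : ξ = u / s := by rw [hu]; field_simp
  have hn0 : 0 < n := by linarith
  have hinv : 1 / n ≤ 1 / s := by
    rw [hns]; apply one_div_le_one_div_of_le hs0; nlinarith
  set h := 2 / n with hh
  have hh0 : 0 < h := by positivity
  have hhs : h ≤ 2 / s := by
    have e1 : h = 2 * (1 / n) := by rw [hh]; ring
    have e2 : 2 / s = 2 * (1 / s) := by ring
    linarith
  have hnh : n * h = 2 := by rw [hh]; field_simp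
  have hy : |y| ≤ ξ + h := by
    have : |y| ≤ |x| + |y - x| := by
      have := abs_add_le x (y - x)
      simpa using this
    linarith
  have hy0 := abs_nonneg y
  -- cubic remainder
  have t1 : n * (M * |y| ^ 3) ≤ (4 * M * u ^ 3 + 32 * M) / s := by
    have c1 : |y| ^ 3 ≤ (ξ + h) ^ 3 := pow_le_pow_left₀ hy0 hy 3
    have c2 : (ξ + h) ^ 3 ≤ 4 * (ξ ^ 3 + h ^ 3) := by
      nlinarith [mul_nonneg (add_nonneg hξ0 hh0.le) (sq_nonneg (ξ - h))]
    have c3 : n * ξ ^ 3 = u ^ 3 / s := by rw [hξu, hns]; field_simp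
    have c4 : n * h ^ 3 ≤ 8 / s := by
      have e1 : n * h ^ 3 = 2 * h * h := by
        have : n * h ^ 3 = (n * h) * h * h := by ring
        rw [this, hnh]
      have e2 : h ≤ 2 := by rw [hh]; exact div_le_self (by norm_num) hn
      have e3 : 8 / s = 2 * 2 * (2 / s) := by ring
      rw [e1, e3]
      nlinarith
    have c5 : n * (M * |y| ^ 3) ≤ n * (M * (4 * (ξ ^ 3 + h ^ 3))) := by
      gcongr; exact c1.trans c2
    have c6 : n * (M * (4 * (ξ ^ 3 + h ^ 3))) = 4 * M * (n * ξ ^ 3) + 4 * M * (n * h ^ 3) := by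
      ring
    have c7 : (4 * M * u ^ 3 + 32 * M) / s = 4 * M * (u ^ 3 / s) + 4 * M * (8 / s) := by ring
    rw [c7]
    have c8 : 4 * M * (n * h ^ 3) ≤ 4 * M * (8 / s) :=
      mul_le_mul_of_nonneg_left c4 (by positivity)
    rw [c3] at c6
    linarith
  -- displacement of the Gaussian exponent inside one cell
  have t2 : n * lam / 2 * |y ^ 2 - x ^ 2| ≤ lam * (2 * u + 2) / s := by
    have c1 : |y ^ 2 - x ^ 2| ≤ h * (2 * ξ + h) := by
      have : y ^ 2 - x ^ 2 = (y - x) * (y + x) := by ring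
      rw [this, abs_mul]
      have : |y + x| ≤ 2 * ξ + h := (abs_add_le y x).trans (by linarith)
      exact mul_le_mul hxy this (abs_nonneg _) hh0.le
    have c2 : n * lam / 2 * |y ^ 2 - x ^ 2| ≤ n * lam / 2 * (h * (2 * ξ + h)) :=
      mul_le_mul_of_nonneg_left c1 (by positivity)
    have c3 : n * lam / 2 * (h * (2 * ξ + h)) = lam * (2 * ξ + h) := by
      have : n * lam / 2 * (h * (2 * ξ + h)) = (n * h) * lam / 2 * (2 * ξ + h) := by ring
      rw [this, hnh]; ring
    have c4 : lam * (2 * u + 2) / s = lam * (2 * (u / s) + 2 / s) := by ring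
    rw [c4, ← hξu]
    have : lam * (2 * ξ + h) ≤ lam * (2 * ξ + 2 / s) :=
      mul_le_mul_of_nonneg_left (by linarith) hlam.le
    linarith
  have t3 : |E| ≤ A * (u + 4) / s := by
    have c4 : A * (u + 4) / s = A * (u / s + 2 * (2 / s)) := by ring
    rw [c4, ← hξu]
    exact hE.trans (mul_le_mul_of_nonneg_left (by linarith) hA.le)
  have split : (-(n * ψ) + E) - (-(n * lam * x ^ 2 / 2))
      = -(n * (ψ - lam / 2 * y ^ 2)) + -(n * lam / 2 * (y ^ 2 - x ^ 2)) + E := by ring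
  have tri : |(-(n * ψ) + E) - (-(n * lam * x ^ 2 / 2))|
      ≤ n * |ψ - lam / 2 * y ^ 2| + n * lam / 2 * |y ^ 2 - x ^ 2| + |E| := by
    rw [split]
    refine (abs_add_three _ _ _).trans ?_
    rw [abs_neg, abs_neg, abs_mul, abs_mul, abs_of_pos hn0,
      abs_of_pos (show 0 < n * lam / 2 by positivity)]
  have t0 : n * |ψ - lam / 2 * y ^ 2| ≤ n * (M * |y| ^ 3) :=
    mul_le_mul_of_nonneg_left hT hn0.le
  have total : |(-(n * ψ) + E) - (-(n * lam * x ^ 2 / 2))|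
      ≤ (4 * M * u ^ 3 + 32 * M + lam * (2 * u + 2) + A * (u + 4)) / s := by
    rw [add_div, add_div]; linarith
  refine total.trans (div_le_div_of_nonneg_right ?_ hs0.le)
  obtain ⟨p1, p3⟩ := le_one_add_pow_five hu0
  have p5 : 0 ≤ u ^ 5 := by positivity
  nlinarith [mul_le_mul_of_nonneg_left p1 hlam.le, mul_le_mul_of_nonneg_left p3 hM.le,
    mul_le_mul_of_nonneg_left p1 hA.le, mul_nonneg hM.le p5, mul_nonneg hlam.le p5,
    mul_nonneg hA.le p5]

/-- In the bulk, the exponents differ by `O((1 + u⁵) / √n)` with `u = √n |x|`, while both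
exponentials are `O(exp (-a u²))`; the quadratic lower bound on `ψ` gives the latter, so no
smallness of the cubic remainder against `u²` is required. -/
lemma near_estimate {n lam M A b a x y ψ E : ℝ} (hn : 1 ≤ n) (hlam : 0 < lam) (hM : 0 < M)
    (hA : 0 < A) (hb : 0 < b) (hab : a ≤ b / 2) (hal : a ≤ lam / 2) (hxy : |y - x| ≤ 2 / n)
    (hx : |x| ≤ 1)
    (hT : |ψ - lam / 2 * y ^ 2| ≤ M * |y| ^ 3) (hq : b * y ^ 2 ≤ ψ)
    (hE : |E| ≤ A * (|y| + 2 / n)) :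
    |Real.exp (-(n * ψ) + E) - Real.exp (-(n * lam * x ^ 2 / 2))|
      ≤ (36 * M + 4 * lam + 5 * A) * (Real.exp (4 * b + 5 * A) + 1) / √n *
        ((1 + (√n * |x|) ^ 5) * Real.exp (-a * (√n * |x|) ^ 2)) := by
  have hn0 : 0 < n := by linarith
  have hu2 : (√n * |x|) ^ 2 = n * x ^ 2 := by
    rw [mul_pow, Real.sq_sqrt hn0.le, sq_abs]
  have h1 := near_exponent_bound hn hlam hM hA hxy hT hE
  have hq2 : Real.exp (-(n * lam * x ^ 2 / 2)) ≤ Real.exp (-a * (√n * |x|) ^ 2) := by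
    rw [hu2, Real.exp_le_exp]
    nlinarith [mul_le_mul_of_nonneg_right hal (show 0 ≤ n * x ^ 2 by positivity)]
  have hp2 : Real.exp (-(n * ψ) + E)
      ≤ Real.exp (4 * b + 5 * A) * Real.exp (-a * (√n * |x|) ^ 2) := by
    rw [hu2, ← Real.exp_add, Real.exp_le_exp]
    have c1 := shifted_square_bound hn hxy
    have c2 : n * (b * y ^ 2) ≤ n * ψ := mul_le_mul_of_nonneg_left hq hn0.le
    have c3 : b * (n * x ^ 2 / 2 - 4) ≤ b * (n * y ^ 2) := mul_le_mul_of_nonneg_left c1 hb.le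
    have c4 : a * (n * x ^ 2) ≤ b / 2 * (n * x ^ 2) :=
      mul_le_mul_of_nonneg_right hab (by positivity)
    have c5 : E ≤ 5 * A := by
      have d1 : |y| ≤ |x| + |y - x| := by simpa using abs_add_le x (y - x)
      have d2 : 2 / n ≤ 2 := div_le_self (by norm_num) hn
      have d3 : A * (|y| + 2 / n) ≤ A * 5 := mul_le_mul_of_nonneg_left (by linarith) hA.le
      linarith [le_abs_self E]
    nlinarith
  refine (abs_exp_sub_exp_le _ _).trans ?_
  calc _ ≤ ((36 * M + 4 * lam + 5 * A) * (1 + (√n * |x|) ^ 5) / √n) *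
        (Real.exp (4 * b + 5 * A) * Real.exp (-a * (√n * |x|) ^ 2)
          + Real.exp (-a * (√n * |x|) ^ 2)) :=
      mul_le_mul h1 (add_le_add hp2 hq2) (by positivity) (by positivity)
    _ = _ := by ring

/-- Off the bulk `u = √n |x| ≥ √n e`, so a factor `1 / √n` can be bought with a power of `u`. -/
lemma far_gaussian {n lam a e x : ℝ} (hn : 1 ≤ n) (he : 0 < e)
    (hal : a ≤ lam / 2) (hx : e ≤ |x|) :
    Real.exp (-(n * lam * x ^ 2 / 2))
      ≤ 1 / e / √n * ((1 + (√n * |x|) ^ 5) * Real.exp (-a * (√n * |x|) ^ 2)) := by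
  have hn0 : 0 < n := by linarith
  have hs0 : 0 < √n := Real.sqrt_pos.2 hn0
  have hu2 : (√n * |x|) ^ 2 = n * x ^ 2 := by
    rw [mul_pow, Real.sq_sqrt hn0.le, sq_abs]
  have hq2 : Real.exp (-(n * lam * x ^ 2 / 2)) ≤ Real.exp (-a * (√n * |x|) ^ 2) := by
    rw [hu2, Real.exp_le_exp]
    nlinarith [mul_le_mul_of_nonneg_right hal (show 0 ≤ n * x ^ 2 by positivity)]
  have h1 : 1 ≤ 1 / e / √n * (1 + (√n * |x|) ^ 5) := by
    have p := (le_one_add_pow_five (show 0 ≤ √n * |x| by positivity)).1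
    have : √n * e ≤ √n * |x| := mul_le_mul_of_nonneg_left hx hs0.le
    rw [div_div, one_div, inv_mul_eq_div, le_div_iff₀ (by positivity)]
    linarith
  calc _ ≤ 1 * Real.exp (-a * (√n * |x|) ^ 2) := by rw [one_mul]; exact hq2
    _ ≤ (1 / e / √n * (1 + (√n * |x|) ^ 5)) * Real.exp (-a * (√n * |x|) ^ 2) :=
      mul_le_mul_of_nonneg_right h1 (Real.exp_pos _).le
    _ = _ := by ring

/-- Off the bulk the Stirling error contributes at most a factor `e² n²`, and
`n² = √n ^ 5 / √n ≤ (u / e) ^ 5 / √n` with `u = √n |x|`. -/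
lemma far_estimate {n b a e x y ψ E : ℝ} (hn : 1 ≤ n) (he : 0 < e)
    (hb : 0 < b) (hab : a ≤ b / 2) (hxy : |y - x| ≤ 2 / n)
    (hx : e ≤ |x|) (hq : b * y ^ 2 ≤ ψ) (hE : E ≤ 2 * (1 + Real.log n)) :
    Real.exp (-(n * ψ) + E)
      ≤ Real.exp (4 * b + 2) / e ^ 5 / √n *
        ((1 + (√n * |x|) ^ 5) * Real.exp (-a * (√n * |x|) ^ 2)) := by
  have hn0 : 0 < n := by linarith
  have hs0 : 0 < √n := Real.sqrt_pos.2 hn0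
  have hu2 : (√n * |x|) ^ 2 = n * x ^ 2 := by
    rw [mul_pow, Real.sq_sqrt hn0.le, sq_abs]
  have h1 : Real.exp (-(n * ψ) + E)
      ≤ n ^ 2 * (Real.exp (4 * b + 2) * Real.exp (-a * (√n * |x|) ^ 2)) := by
    have hlog : n ^ 2 = Real.exp (2 * Real.log n) := by
      rw [mul_comm, Real.exp_mul, Real.exp_log hn0]; norm_cast
    rw [hlog, hu2, ← Real.exp_add, ← Real.exp_add, Real.exp_le_exp]
    have c1 := shifted_square_bound hn hxy
    have c2 : n * (b * y ^ 2) ≤ n * ψ := mul_le_mul_of_nonneg_left hq hn0.le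
    have c3 : b * (n * x ^ 2 / 2 - 4) ≤ b * (n * y ^ 2) := mul_le_mul_of_nonneg_left c1 hb.le
    have c4 : a * (n * x ^ 2) ≤ b / 2 * (n * x ^ 2) :=
      mul_le_mul_of_nonneg_right hab (by positivity)
    nlinarith
  have h2 : n ^ 2 ≤ 1 / e ^ 5 / √n * (1 + (√n * |x|) ^ 5) := by
    have c1 : (√n * e) ^ 5 ≤ (√n * |x|) ^ 5 :=
      pow_le_pow_left₀ (by positivity) (mul_le_mul_of_nonneg_left hx hs0.le) 5
    rw [div_div, one_div, inv_mul_eq_div, le_div_iff₀ (by positivity)]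
    have c2 : n ^ 2 * (e ^ 5 * √n) = (√n * e) ^ 5 := by
      have : n ^ 2 = √n ^ 4 := by
        rw [show √n ^ 4 = (√n ^ 2) ^ 2 by ring, Real.sq_sqrt hn0.le]
      rw [this]; ring
    linarith
  refine h1.trans ?_
  calc _ ≤ (1 / e ^ 5 / √n * (1 + (√n * |x|) ^ 5)) *
        (Real.exp (4 * b + 2) * Real.exp (-a * (√n * |x|) ^ 2)) :=
      mul_le_mul_of_nonneg_right h2 (by positivity)
    _ = _ := by ring

lemma levelWeight_eq_exp (n : ℕ) (K J : ℝ) (k : ℕ) (hn : 1 ≤ n) (hk : k ≤ n) :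
    levelWeight n K J k = Real.exp (-(n * phiKJ K J ((2 * k - n) / n)) +
      (stirlingCorr n - stirlingCorr k - stirlingCorr (n - k))) := by
  have hpos : (0 : ℝ) < n.choose k := by exact_mod_cast Nat.choose_pos hk
  unfold levelWeight
  nth_rewrite 1 [← Real.exp_log hpos]
  rw [← Real.exp_add, log_choose_eq n k hn hk]
  congr 1
  unfold phiKJ
  ring

/-- The dominating function `(1 + u⁵) exp(-a u²)`, used at `u = √n |x|`. -/
noncomputable def envelope (a u : ℝ) : ℝ := (1 + u ^ 5) * Real.exp (-a * u ^ 2)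

lemma envelope_nonneg (a : ℝ) {u : ℝ} (hu : 0 ≤ u) : 0 ≤ envelope a u := by
  unfold envelope; positivity

lemma exists_level_near (n : ℕ) (hn : 1 ≤ n) (m : ℝ) (hm : m ∈ Set.Ioo (-1 : ℝ) 1) :
    ∃ k0 ≤ n, |(2 * (k0 : ℝ) - n) / n - m| ≤ 2 / n := by
  have hn0 : (0 : ℝ) < n := by exact_mod_cast hn
  have hnm0 : 0 ≤ n * (1 + m) / 2 := by
    have := hm.1
    have : 0 ≤ (n : ℝ) * (1 + m) := mul_nonneg hn0.le (by linarith)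
    linarith
  have hk0le := Nat.floor_le hnm0
  have hk0gt := Nat.lt_floor_add_one (n * (1 + m) / 2)
  refine ⟨⌊n * (1 + m) / 2⌋₊, ?_, ?_⟩
  · have : (⌊n * (1 + m) / 2⌋₊ : ℝ) ≤ n := by nlinarith [hm.2]
    exact_mod_cast this
  · have e1 : ∀ k : ℝ, (2 * k - n) / n - m = 2 * (k - n * (1 + m) / 2) / n := by
      intro k; field_simp; ring
    rw [e1, abs_div, abs_of_pos hn0]
    apply div_le_div_of_nonneg_right _ hn0.le
    rw [abs_le]
    constructor <;> linarith

lemma level_mem_Icc (n : ℕ) (hn : 1 ≤ n) (k : ℕ) (hk : k ≤ n) :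
    (2 * (k : ℝ) - n) / n ∈ Set.Icc (-1 : ℝ) 1 := by
  have hn0 : (0 : ℝ) < n := by exact_mod_cast hn
  have hkn : (k : ℝ) ≤ n := by exact_mod_cast hk
  have h0 : (0 : ℝ) ≤ k := k.cast_nonneg
  constructor
  · rw [le_div_iff₀ hn0]; linarith
  · rw [div_le_iff₀ hn0]; linarith

/-- For two levels at distance at least `n d / 4` from both ends, the Stirling errors differ by at
most a multiple of the distance of the corresponding magnetizations per particle. -/
lemma stirling_error_bulk {n k k0 : ℕ} {m d y y0 : ℝ} (hn0 : (0 : ℝ) < n) (hd : 0 < d)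
    (hk : k ≤ n) (hk0 : k0 ≤ n) (hkr : (k : ℝ) = n * (1 + m + y) / 2)
    (hk0r : (k0 : ℝ) = n * (1 + m + y0) / 2)
    (b1 : n * d / 4 ≤ k ∧ n * d / 4 ≤ n - (k : ℝ))
    (b2 : n * d / 4 ≤ k0 ∧ n * d / 4 ≤ n - (k0 : ℝ)) (hy0 : |y0| ≤ 2 / n) :
    |stirlingCorr k0 + stirlingCorr (n - k0) - stirlingCorr k - stirlingCorr (n - k)|
      ≤ 4 / d * (|y| + 2 / n) := by
  have hL : 0 < n * d / 4 := by positivity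
  have l1 := stirlingCorr_lipschitz _ hL k k0 b1.1 b2.1
  have l2 := stirlingCorr_lipschitz _ hL (n - k) (n - k0)
    (by rw [Nat.cast_sub hk]; exact b1.2) (by rw [Nat.cast_sub hk0]; exact b2.2)
  rw [Nat.cast_sub hk, Nat.cast_sub hk0,
    show (n : ℝ) - k0 - (n - k) = -((k0 : ℝ) - k) by ring, abs_neg] at l2
  have l3 : |(k0 : ℝ) - k| ≤ n / 2 * (|y| + 2 / n) := by
    have e1 : (k0 : ℝ) - k = n / 2 * (y0 - y) := by rw [hkr, hk0r]; ring
    rw [e1, abs_mul, abs_of_pos (by positivity : (0 : ℝ) < n / 2)]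
    apply mul_le_mul_of_nonneg_left _ (by positivity)
    have := abs_sub y0 y
    linarith
  have l4 : |(k0 : ℝ) - k| / (n * d / 4) ≤ 2 / d * (|y| + 2 / n) := by
    rw [div_le_iff₀ hL]
    refine l3.trans (le_of_eq ?_)
    field_simp
    norm_num
  have l5 : stirlingCorr k0 + stirlingCorr (n - k0) - stirlingCorr k - stirlingCorr (n - k)
      = (stirlingCorr k0 - stirlingCorr k)
        + (stirlingCorr (n - k0) - stirlingCorr (n - k)) := by ring
  rw [l5]
  refine (abs_add_le _ _).trans ?_
  have l6 : 4 / d * (|y| + 2 / n) = 2 / d * (|y| + 2 / n) + 2 / d * (|y| + 2 / n) := by ring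
  linarith

/-- After normalization, the level weights approximate the Gaussian density with variance
`1 / (n φ''(m))` up to `O(1 / √n)` times an integrable function of `√n |x|`. The second part covers
the points outside the range of the lattice, where the approximating step function vanishes. -/
lemma pointwise_estimate (K J m : ℝ) (hm : m ∈ Set.Ioo (-1 : ℝ) 1)
    (hcrit : phi1 K J m = 0) (hpos : 0 < phi2 K J m)
    (hmin : ∀ y ∈ Set.Icc (-1 : ℝ) 1, phiKJ K J m ≤ phiKJ K J y)
    (huniq : ∀ y ∈ Set.Icc (-1 : ℝ) 1, phiKJ K J y = phiKJ K J m → y = m) :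
    ∃ N : ℕ, ∃ C > 0, ∃ a > 0, ∀ n : ℕ, N ≤ n → 1 ≤ n → ∃ R > 0,
      (∀ k ≤ n, ∀ x : ℝ, |((2 * k - n) / n - m) - x| ≤ 2 / n →
        |levelWeight n K J k / R - Real.exp (-(n * phi2 K J m * x ^ 2 / 2))|
          ≤ C / √n * envelope a (√n * |x|)) ∧
      (∀ x : ℝ, (x ≤ -1 - m ∨ 1 - m ≤ x) →
        Real.exp (-(n * phi2 K J m * x ^ 2 / 2)) ≤ C / √n * envelope a (√n * |x|)) := by
  obtain ⟨M, hM, r, hr, hT⟩ := phi_taylor K J m hm hcrit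
  obtain ⟨b, hb, hquad⟩ := phi_quadratic_lower K J m hm hcrit hpos hmin huniq
  set lam := phi2 K J m with hlam
  set d := min (1 - m) (1 + m) with hd
  have hd0 : 0 < d := lt_min (by linarith [hm.2]) (by linarith [hm.1])
  have hd1 : d ≤ 1 - m := min_le_left _ _
  have hd2 : d ≤ 1 + m := min_le_right _ _
  set e := min (r / 2) (d / 4) with he
  have he0 : 0 < e := lt_min (by linarith) (by linarith)
  have he1 : e ≤ r / 2 := min_le_left _ _
  have he2 : e ≤ d / 4 := min_le_right _ _
  set A := 4 / d with hA
  have hA0 : 0 < A := by positivity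
  set a := min (b / 2) (lam / 2) with ha
  have ha0 : 0 < a := lt_min (by linarith) (by linarith)
  set C1 := (36 * M + 4 * lam + 5 * A) * (Real.exp (4 * b + 5 * A) + 1) with hC1
  set C2 := Real.exp (4 * b + 2) / e ^ 5 with hC2
  set C3 := 1 / e with hC3
  have hC10 : 0 < C1 := by positivity
  have hC20 : 0 < C2 := by positivity
  have hC30 : 0 < C3 := by positivity
  refine ⟨⌈2 / e⌉₊, C1 + C2 + C3, by positivity, a, ha0, fun n hnN hn => ?_⟩
  have hn' : (1 : ℝ) ≤ n := by exact_mod_cast hn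
  have hn0 : (0 : ℝ) < n := by linarith
  have hs0 : 0 < √(n : ℝ) := Real.sqrt_pos.2 hn0
  have h2n : 2 / (n : ℝ) ≤ e := by
    have : 2 / e ≤ n := Nat.ceil_le.1 hnN
    rw [div_le_iff₀ he0] at this
    rw [div_le_iff₀ hn0]
    linarith
  -- a level within one lattice step of the minimizer fixes the normalization
  obtain ⟨k0, hk0n, hy0⟩ := exists_level_near n hn m hm
  have hlevel : ∀ k : ℕ, (k : ℝ) = n * (1 + m + ((2 * k - n) / n - m)) / 2 := by
    intro k; field_simp; ring
  set R := Real.exp (-(n * phiKJ K J m) +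
      (stirlingCorr n - stirlingCorr k0 - stirlingCorr (n - k0))) with hR
  have hR0 : 0 < R := Real.exp_pos _
  have hmono : ∀ {c x : ℝ}, c ≤ C1 + C2 + C3 →
      c / √(n : ℝ) * ((1 + (√(n : ℝ) * |x|) ^ 5) * Real.exp (-a * (√(n : ℝ) * |x|) ^ 2))
        ≤ (C1 + C2 + C3) / √(n : ℝ) * envelope a (√(n : ℝ) * |x|) := by
    intro c x hc
    exact mul_le_mul_of_nonneg_right (div_le_div_of_nonneg_right hc hs0.le)
      (envelope_nonneg a (by positivity))
  refine ⟨R, hR0, ?_, ?_⟩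
  · intro k hk x hx
    set y := (2 * (k : ℝ) - n) / n - m with hy
    have hym : (2 * (k : ℝ) - n) / n = m + y := by rw [hy]; ring
    have hkr := hlevel k
    rw [← hy] at hkr
    have hk0r := hlevel k0
    have hyIcc : m + y ∈ Set.Icc (-1 : ℝ) 1 := by
      rw [← hym]
      exact level_mem_Icc n hn k hk
    set E := stirlingCorr k0 + stirlingCorr (n - k0) - stirlingCorr k - stirlingCorr (n - k)
      with hE
    have hratio : levelWeight n K J k / R
        = Real.exp (-(n * (phiKJ K J (m + y) - phiKJ K J m)) + E) := by
      rw [levelWeight_eq_exp n K J k hn hk, hR, ← Real.exp_sub, hym, hE]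
      congr 1
      ring
    have hq : b * y ^ 2 ≤ phiKJ K J (m + y) - phiKJ K J m := by
      have := hquad (m + y) hyIcc
      simpa using this
    rw [hratio]
    rcases le_total |x| e with hxe | hxe
    · have hyx : |y| ≤ |x| + |y - x| := by simpa using abs_add_le x (y - x)
      have hy2e : |y| ≤ 2 * e := by linarith
      have hTy : |phiKJ K J (m + y) - phiKJ K J m - lam / 2 * y ^ 2| ≤ M * |y| ^ 3 := by
        have := hT (m + y) (by simpa using hy2e.trans (by linarith))
        simpa using this
      -- both `k` and `k0` lie at distance at least `n d / 4` from the ends `0` and `n`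
      have hbulk : ∀ (j : ℕ) (w : ℝ), (j : ℝ) = n * (1 + m + w) / 2 → |w| ≤ 2 * e →
          n * d / 4 ≤ j ∧ n * d / 4 ≤ n - (j : ℝ) := by
        intro j w hj hw
        have := abs_le.1 hw
        constructor
        · have := mul_le_mul_of_nonneg_left (show d / 2 ≤ 1 + m + w by linarith) hn0.le
          linarith
        · have := mul_le_mul_of_nonneg_left (show d / 2 ≤ 1 - m - w by linarith) hn0.le
          linarith
      have b1 := hbulk k y hkr hy2e
      have b2 := hbulk k0 _ hk0r (by linarith)
      have hEb : |E| ≤ A * (|y| + 2 / n) :=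
        stirling_error_bulk hn0 hd0 hk hk0n hkr hk0r b1 b2 hy0
      refine (near_estimate hn' hpos hM hA0 hb (min_le_left _ _) (min_le_right _ _) hx
        (by linarith) hTy hq hEb).trans (hmono (by linarith))
    · have hEb : E ≤ 2 * (1 + Real.log n) := by
        have l1 := stirlingCorr_le_log n hn
        have l2 := stirlingCorr_mono hk0n
        have l3 := stirlingCorr_mono (Nat.sub_le n k0)
        have l4 := stirlingCorr_nonneg k
        have l5 := stirlingCorr_nonneg (n - k)
        rw [hE]; linarith
      have f1 := far_estimate hn' he0 hb (min_le_left (b / 2) (lam / 2)) hx hxe hq hEb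
      have f2 := far_gaussian hn' he0 (min_le_right (b / 2) (lam / 2)) hxe
      have g1 := hmono (c := C2) (x := x) (by linarith)
      have g2 := hmono (c := C3) (x := x) (by linarith)
      rw [abs_le]
      constructor
      · have := Real.exp_pos (-(n * (phiKJ K J (m + y) - phiKJ K J m)) + E)
        linarith [f2.trans g2]
      · have := Real.exp_pos (-(n * lam * x ^ 2 / 2))
        linarith [f1.trans g1]
  · intro x hx
    have hxe : e ≤ |x| := by
      rcases hx with h | h
      · exact le_trans (by linarith) (neg_le_abs x)
      · exact le_trans (by linarith) (le_abs_self x)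
    exact (far_gaussian hn' he0 (min_le_right (b / 2) (lam / 2)) hxe).trans
      (hmono (by linarith))

/-! ### From lattice sums to probabilities -/

lemma integrable_envelope {a : ℝ} (ha : 0 < a) : Integrable fun u : ℝ => envelope a |u| := by
  have h0 : Integrable fun u : ℝ => Real.exp (-a * u ^ 2) := integrable_exp_neg_mul_sq ha
  have h5 := (integrable_rpow_mul_exp_neg_mul_sq ha (s := 5) (by norm_num)).norm
  refine (h0.add h5).congr (ae_of_all _ fun u => ?_)
  have e5 : u ^ (5 : ℝ) = u ^ (5 : ℕ) := by exact_mod_cast Real.rpow_natCast u 5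
  simp only [Pi.add_apply, envelope, sq_abs, norm_mul, Real.norm_eq_abs, Real.abs_exp, e5,
    abs_pow]
  ring

lemma stdNormalCDF_nonneg (z : ℝ) : 0 ≤ stdNormalCDF z := ENNReal.toReal_nonneg

lemma stdNormalCDF_le_one (z : ℝ) : stdNormalCDF z ≤ 1 := by
  have := measureReal_le_one (μ := gaussianReal 0 1) (s := Set.Iic z)
  exact this

lemma tendsto_stdNormalCDF : Tendsto stdNormalCDF atTop (nhds 1) := by
  have h := tendsto_cdf_atTop (gaussianReal 0 1)
  refine h.congr fun z => ?_
  rw [cdf_eq_real]; rfl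

/-- If numerator and denominator of a probability `A / B` are approximated on the same scale, so is
the quotient; `A ≤ B` makes a lower bound on `B` unnecessary. -/
lemma ratio_bound {α A B Φ η : ℝ} (hB : 0 < B) (hA : 0 ≤ A) (hAB : A ≤ B)
    (h1 : |α * A - Φ| ≤ η) (h2 : |α * B - 1| ≤ η) : |A / B - Φ| ≤ 2 * η := by
  have hq0 : 0 ≤ A / B := div_nonneg hA hB.le
  have hq1 : A / B ≤ 1 := (div_le_one hB).2 hAB
  have e : A / B - Φ = (α * A - Φ) - A / B * (α * B - 1) := by field_simp; ring
  rw [e]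
  have h3 : |A / B * (α * B - 1)| ≤ 1 * η := by
    rw [abs_mul, abs_of_nonneg hq0]
    exact mul_le_mul hq1 h2 (abs_nonneg _) zero_le_one
  calc _ ≤ |α * A - Φ| + |A / B * (α * B - 1)| := abs_sub _ _
    _ ≤ 2 * η := by linarith

/-- Uniform Berry–Esseen bound for the rescaled magnetization
`W_n = (S_n − n m*)/√(n/φ''(m*))` of the cubic Curie–Weiss model, when `φ_{K,J}`
has a unique minimizer `m*` in `(−1,1)` with `φ''_{K,J}(m*) > 0`:
`sup_z |P_{n,K,J}(W_n ≤ z) − Φ(z)| ≤ c/√n`. -/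
theorem stmt_8 (K J : ℝ) (hK : 0 < K) (mstar : ℝ)
    (hmem : mstar ∈ Set.Ioo (-1 : ℝ) 1)
    (hmin : ∀ y ∈ Set.Icc (-1 : ℝ) 1, phiKJ K J mstar ≤ phiKJ K J y)
    (huniq : ∀ y ∈ Set.Icc (-1 : ℝ) 1, phiKJ K J y = phiKJ K J mstar → y = mstar)
    (hconv : 0 < iteratedDeriv 2 (phiKJ K J) mstar) :
    ∃ c : ℝ, 0 < c ∧ ∀ n : ℕ, 1 ≤ n → ∀ z : ℝ,
      |cubicProb n K J
          {x | (totalMag n x - n * mstar) /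
                Real.sqrt (n / iteratedDeriv 2 (phiKJ K J) mstar) ≤ z}
        - stdNormalCDF z| ≤ c / Real.sqrt n := by
  set lam := iteratedDeriv 2 (phiKJ K J) mstar with hlam
  have hlam2 : lam = phi2 K J mstar := iteratedDeriv_two_phiKJ K J hmem.1 hmem.2
  have hcrit : phi1 K J mstar = 0 := by
    have hloc : IsLocalMin (phiKJ K J) mstar := by
      filter_upwards [Icc_mem_nhds hmem.1 hmem.2] with y hy using hmin y hy
    exact hloc.hasDerivAt_eq_zero (hasDerivAt_phiKJ K J hmem.1 hmem.2)
  obtain ⟨N, C, hC, a, ha, hest⟩ :=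
    pointwise_estimate K J mstar hmem hcrit (hlam2 ▸ hconv) hmin huniq
  rw [← hlam2] at hest
  have hsl : 0 < √lam := Real.sqrt_pos.2 hconv
  set F : ℝ → ℝ := fun t => envelope a (|t| / √lam) with hF
  have hFint : Integrable F := by
    have := (integrable_envelope ha).comp_div hsl.ne'
    refine this.congr (ae_of_all _ fun t => ?_)
    simp only [hF, abs_div, abs_of_pos hsl]
  have hF0 : 0 ≤ ∫ t, F t := integral_nonneg fun t => envelope_nonneg a (by positivity)
  set c1 := C * (∫ t, F t) + 2 * √lam with hc1
  have hc10 : 0 < c1 := by positivity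
  refine ⟨2 * c1 + √N, by positivity, fun n hn z => ?_⟩
  have hn0 : (0 : ℝ) < n := by exact_mod_cast hn
  have hs0 : 0 < √(n : ℝ) := Real.sqrt_pos.2 hn0
  have hB : 0 < ∑ k ∈ Finset.range (n + 1), levelWeight n K J k :=
    Finset.sum_pos (fun k hk => levelWeight_pos n K J k (by
      have := Finset.mem_range.1 hk; omega)) ⟨0, by simp⟩
  rw [cubicProb_eq n K J (fun s => (s - n * mstar) / √(n / lam) ≤ z)]
  set A : ℝ → ℝ := fun z => ∑ k ∈ (Finset.range (n + 1)).filter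
    (fun k : ℕ => (2 * (k : ℝ) - n - n * mstar) / √(n / lam) ≤ z), levelWeight n K J k with hA
  set B := ∑ k ∈ Finset.range (n + 1), levelWeight n K J k with hBdef
  have hA0 : 0 ≤ A z := Finset.sum_nonneg fun k _ => levelWeight_nonneg n K J k
  have hAB : A z ≤ B := Finset.sum_le_sum_of_subset_of_nonneg (Finset.filter_subset _ _)
    fun k _ _ => levelWeight_nonneg n K J k
  change |A z / B - stdNormalCDF z| ≤ _
  rcases lt_or_ge n N with hnN | hnN
  · -- for the finitely many small `n` the bound exceeds `1`
    have h1 : |A z / B - stdNormalCDF z| ≤ 1 := by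
      have q0 : 0 ≤ A z / B := div_nonneg hA0 hB.le
      have q1 : A z / B ≤ 1 := (div_le_one hB).2 hAB
      have q2 := stdNormalCDF_nonneg z
      have q3 := stdNormalCDF_le_one z
      rw [abs_le]; constructor <;> linarith
    refine h1.trans ?_
    rw [le_div_iff₀ hs0]
    have : √(n : ℝ) ≤ √(N : ℝ) := Real.sqrt_le_sqrt (by exact_mod_cast hnN.le)
    linarith
  obtain ⟨R, hR, hin, hout⟩ := hest n hnN hn
  set q := √(n / lam) with hq
  have hqe : q = √n / √lam := Real.sqrt_div hn0.le lam
  have hq0 : 0 < q := by rw [hqe]; positivity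
  have hnn : √(n : ℝ) * √n = n := Real.mul_self_sqrt hn0.le
  -- `x = t q / n` is the deviation of the magnetization per particle at the rescaled point `t`
  have hxsq : ∀ t : ℝ, n * lam * (t * q / n) ^ 2 / 2 = t ^ 2 / 2 := by
    intro t
    have hqq : q ^ 2 = n / lam := Real.sq_sqrt (by positivity)
    have : n * lam * (t * q / n) ^ 2 / 2 = lam * t ^ 2 * q ^ 2 / n / 2 := by
      field_simp
    rw [this, hqq]
    field_simp
  have hxu : ∀ t : ℝ, √(n : ℝ) * |t * q / n| = |t| / √lam := by
    intro t
    rw [abs_div, abs_mul, abs_of_pos hq0, abs_of_pos hn0, hqe]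
    field_simp
    rw [sq, hnn, mul_comm]
  have hgauss : ∀ t : ℝ, gaussianPDFReal 0 1 t
      = (√(2 * π))⁻¹ * Real.exp (-(n * lam * (t * q / n) ^ 2 / 2)) := by
    intro t
    rw [gaussianPDFReal_std, hxsq]
    congr 2
    ring
  have hp0 : 0 < (√(2 * π))⁻¹ := by positivity
  have hshrink : ∀ {w W : ℝ}, 0 ≤ w → w ≤ W → (√(2 * π))⁻¹ * w ≤ W := by
    intro w W hw hW
    have := mul_le_mul_of_nonneg_right inv_sqrt_two_pi_le_one hw
    linarith
  set δ := 2 / q with hδ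
  have hδ0 : 0 < δ := by positivity
  set t0 := (-(n : ℝ) - n * mstar) / q with ht0
  have htk : ∀ k : ℕ, t0 + k * δ = (2 * (k : ℝ) - n - n * mstar) / q := by
    intro k; rw [ht0, hδ]; field_simp; ring
  have hlat : ∀ z, |δ * ((√(2 * π))⁻¹ / R) * A z - stdNormalCDF z| ≤ c1 / √n := by
    intro z
    have key := lattice_sum_cdf n t0 δ hδ0 (fun k => (√(2 * π))⁻¹ * (levelWeight n K J k / R))
      (fun t => C / √n * F t) (hFint.const_mul _) ?_ ?_ z
    · have e1 : (∫ t, C / √(n : ℝ) * F t) + δ = c1 / √n := by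
        rw [integral_const_mul, hc1, hδ, hqe]; field_simp
      rw [e1] at key
      have e2 : δ * ∑ k ∈ (Finset.range (n + 1)).filter
            (fun k : ℕ => t0 + (k : ℝ) * δ ≤ z), (√(2 * π))⁻¹ * (levelWeight n K J k / R)
          = δ * ((√(2 * π))⁻¹ / R) * A z := by
        simp only [htk, hA]
        rw [Finset.mul_sum, Finset.mul_sum]
        exact Finset.sum_congr rfl fun k _ => by ring
      rw [e2] at key
      exact key
    · intro k hk t ht
      rw [htk] at ht
      have hclose : |((2 * (k : ℝ) - n) / n - mstar) - t * q / n| ≤ 2 / n := by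
        have e1 : ((2 * (k : ℝ) - n) / n - mstar) - t * q / n
            = ((2 * (k : ℝ) - n - n * mstar) - t * q) / n := by field_simp
        rw [e1, abs_div, abs_of_pos hn0]
        apply div_le_div_of_nonneg_right _ hn0.le
        have h1 := ht.1
        have h2 := ht.2
        rw [div_le_iff₀ hq0] at h1
        rw [hδ, ← add_div, lt_div_iff₀ hq0] at h2
        rw [abs_le]; constructor <;> linarith
      have := hin k hk _ hclose
      rw [hxu] at this
      rw [hgauss, ← mul_sub, abs_mul, abs_of_pos hp0]
      exact hshrink (abs_nonneg _) this
    · intro t ht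
      have hside : t * q / n ≤ -1 - mstar ∨ 1 - mstar ≤ t * q / n := by
        rw [Set.mem_Ico, not_and_or, not_le, not_lt] at ht
        rcases ht with h | h
        · left
          rw [ht0, lt_div_iff₀ hq0] at h
          rw [div_le_iff₀ hn0]
          linarith
        · right
          have h' : t0 + n * δ ≤ t := by linarith
          rw [htk, div_le_iff₀ hq0] at h'
          rw [le_div_iff₀ hn0]
          linarith
      have := hout _ hside
      rw [hxu] at this
      rw [hgauss]
      exact hshrink (Real.exp_pos _).le this
  -- letting `z → ∞` controls the partition function
  have htot : |δ * ((√(2 * π))⁻¹ / R) * B - 1| ≤ c1 / √n := by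
    have hlim : Tendsto (fun z => |δ * ((√(2 * π))⁻¹ / R) * B - stdNormalCDF z|) atTop
        (nhds |δ * ((√(2 * π))⁻¹ / R) * B - 1|) :=
      (tendsto_stdNormalCDF.const_sub _).abs
    refine le_of_tendsto hlim ?_
    filter_upwards [eventually_ge_atTop ((n - n * mstar) / q)] with z hz
    have hAz : A z = B := by
      simp only [hA, hBdef]
      rw [Finset.filter_true_of_mem]
      intro k hk
      have hkn : (k : ℝ) ≤ n := by
        have := Finset.mem_range.1 hk
        exact_mod_cast (by omega : k ≤ n)
      refine le_trans (div_le_div_of_nonneg_right ?_ hq0.le) hz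
      linarith
    rw [← hAz]
    exact hlat z
  have hfin := ratio_bound hB hA0 hAB (hlat z) htot
  refine hfin.trans ?_
  rw [← mul_div_assoc]
  apply div_le_div_of_nonneg_right _ hs0.le
  linarith [Real.sqrt_nonneg (N : ℝ)]
end

section
/- Let K > 0 and J ∈ ℝ, and assume φ_{K,J} attains its minimum over [−1,1] at a unique point m* ∈ (−1,1) with φ_{K,J}''(m*) > 0. Then there exists a constant c = c(K,J) > 0 such that for all n ≥ 1 and all z ∈ ℝ, |P_{n,K,J}(W_n ≤ z) − Φ(z)| ≤ c/((1 + |z|)·√n), where Φ is the standard normal distribution function. -/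
/-!
The proof is a direct local-limit argument. The normalized magnetization takes the values `x_k` of
a lattice with spacing `h = 2√(φ''(m*)/n)`, and the weight of `x_k` is a binomial coefficient times
a Boltzmann factor. Writing `log j! = j log j − j + stirB j`, this weight is
`exp (−n φ(m_k))` times factorial corrections (`choose_eq_exp`). The sequence `stirB` is increasing
with increments in `[0, 1/(j+1)]`, so the corrections change by `O(|k − k₀|/n)` when the
magnetization is near `m*` and are at most polynomial in `n` everywhere.

Near `m*`, the Taylor expansion of `φ` (`phi_local`) then shows that the suitably rescaled weight
`wgt` equals `exp (−x_k²/2)` up to the factor `1 + O((1 + |x_k|)³/√n)`; at distance at least `δ`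
from `m*`, uniqueness of the minimizer gives a gap for `φ` (`phi_gap`) and the weight is
exponentially small. Together (`wgt_close`):
`|wgt − exp (−x_k²/2)| ≤ C (1 + |x_k|)⁻³ / √n` for every `k`.

Each Gaussian value `h · stdPDF x_k` is replaced by the cell mass `Φ(x_{k+1}) − Φ(x_k)`, with error
`O(h² (1 + |x_k|)⁻³)`, and the cell masses telescope. The errors are summed over `x_k ≤ z` when
`z < 0` and over `x_k > z` when `z ≥ 0`; there one factor `(1 + |x_k|)⁻¹` is at most
`(1 + |z|)⁻¹`, and the remaining Riemann sum of `(1 + |x|)⁻²` is bounded (`lattice_sum`). This is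
`assemble`; the total mass of the rescaled weights is `1 + O(n^{-1/2})` and positive, hence bounded
below, so normalizing preserves the bound.
-/

open MeasureTheory ProbabilityTheory Real Filter

/-! ### The factorial correction -/

/-- The correction `log j! − (j log j − j)` to the leading term of Stirling's formula
(with `0 log 0 = 0`). -/
noncomputable def stirB (j : ℕ) : ℝ := Real.log (j.factorial) - j * Real.log j + j

lemma stirB_zero : stirB 0 = 0 := by simp [stirB]

lemma stirB_one : stirB 1 = 1 := by simp [stirB]

/-- The increments of `stirB` equal `1 − j log (1 + 1/j)`, which lies in `[0, 1/(j+1)]`. -/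
lemma stirB_step (j : ℕ) :
    stirB j ≤ stirB (j + 1) ∧ stirB (j + 1) - stirB j ≤ 1 / ((j : ℝ) + 1) := by
  rcases Nat.eq_zero_or_pos j with rfl | hj
  · simp [stirB_zero, stirB_one]
  have hj' : (0 : ℝ) < j := by exact_mod_cast hj
  have hfac : Real.log ((j + 1).factorial) = Real.log ((j : ℝ) + 1) + Real.log (j.factorial) := by
    rw [Nat.factorial_succ]; push_cast
    rw [Real.log_mul (by positivity) (by positivity)]
  have hinc : stirB (j + 1) - stirB j = 1 - j * Real.log (((j : ℝ) + 1) / j) := by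
    rw [Real.log_div (by positivity) (by positivity)]
    unfold stirB; rw [hfac]; push_cast; ring
  have h1 : Real.log (((j : ℝ) + 1) / j) ≤ ((j : ℝ) + 1) / j - 1 :=
    Real.log_le_sub_one_of_pos (by positivity)
  have h2 : 1 - (((j : ℝ) + 1) / j)⁻¹ ≤ Real.log (((j : ℝ) + 1) / j) :=
    Real.one_sub_inv_le_log_of_pos (by positivity)
  have e1 : (j : ℝ) * (((j : ℝ) + 1) / j - 1) = 1 := by field_simp; ring
  have e2 : (j : ℝ) * (1 - (((j : ℝ) + 1) / j)⁻¹) = 1 - 1 / ((j : ℝ) + 1) := by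
    field_simp; ring
  have h1' := mul_le_mul_of_nonneg_left h1 hj'.le
  have h2' := mul_le_mul_of_nonneg_left h2 hj'.le
  rw [e1] at h1'; rw [e2] at h2'
  constructor <;> linarith

lemma stirB_mono : Monotone stirB := monotone_nat_of_le_succ fun j => (stirB_step j).1

lemma stirB_nonneg (j : ℕ) : 0 ≤ stirB j := by
  rw [← stirB_zero]; exact stirB_mono (Nat.zero_le j)

lemma stirB_le (n : ℕ) (hn : 1 ≤ n) : stirB n ≤ 1 + Real.log n := by
  induction n, hn using Nat.le_induction with
  | base => simp [stirB_one]
  | succ j hj ih =>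
    have hj' : (0 : ℝ) < j := by exact_mod_cast hj
    have h2 : 1 - (((j : ℝ) + 1) / j)⁻¹ ≤ Real.log (((j : ℝ) + 1) / j) :=
      Real.one_sub_inv_le_log_of_pos (by positivity)
    have e2 : 1 - (((j : ℝ) + 1) / j)⁻¹ = 1 / ((j : ℝ) + 1) := by
      field_simp; ring
    rw [e2, Real.log_div (by positivity) (by positivity)] at h2
    have := (stirB_step j).2
    push_cast
    linarith

lemma stirB_sub_le {i j : ℕ} (h : i ≤ j) :
    stirB j - stirB i ≤ ((j : ℝ) - i) / ((i : ℝ) + 1) := by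
  induction j, h using Nat.le_induction with
  | base => simp
  | succ j hj ih =>
    have h1 := (stirB_step j).2
    have hij : (i : ℝ) ≤ j := by exact_mod_cast hj
    have h2 : 1 / ((j : ℝ) + 1) ≤ 1 / ((i : ℝ) + 1) := by gcongr
    have : (((j + 1 : ℕ) : ℝ) - i) / ((i : ℝ) + 1)
        = ((j : ℝ) - i) / ((i : ℝ) + 1) + 1 / ((i : ℝ) + 1) := by
      push_cast; ring
    linarith

lemma abs_stirB_sub_le {i j : ℕ} {a : ℝ} (ha : 0 < a) (hi : a ≤ (i : ℝ) + 1)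
    (hj : a ≤ (j : ℝ) + 1) : |stirB i - stirB j| ≤ |(i : ℝ) - j| / a := by
  rcases le_total i j with h | h
  · have hij : (i : ℝ) ≤ j := by exact_mod_cast h
    rw [abs_sub_comm, abs_of_nonneg (sub_nonneg.2 (stirB_mono h)), abs_sub_comm,
      abs_of_nonneg (sub_nonneg.2 hij)]
    refine (stirB_sub_le h).trans ?_
    have : (0 : ℝ) ≤ j - i := by linarith
    gcongr
  · have hij : (j : ℝ) ≤ i := by exact_mod_cast h
    rw [abs_of_nonneg (sub_nonneg.2 (stirB_mono h)), abs_of_nonneg (sub_nonneg.2 hij)]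
    refine (stirB_sub_le h).trans ?_
    have : (0 : ℝ) ≤ i - j := by linarith
    gcongr

/-- Exact form of the entropy asymptotics of binomial coefficients. -/
lemma choose_eq_exp (n k : ℕ) (hn : 1 ≤ n) (hk : k ≤ n) :
    (n.choose k : ℝ) = Real.exp (-(n * binEnt ((2 * k - n) / n))
      + (stirB n - stirB k - stirB (n - k))) := by
  have hn' : (0 : ℝ) < n := by exact_mod_cast hn
  have hpos : (0 : ℝ) < n.choose k := by exact_mod_cast Nat.choose_pos hk
  rw [← Real.exp_log hpos]
  congr 1
  rw [Nat.cast_choose ℝ hk, Real.log_div (by positivity) (by positivity),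
    Real.log_mul (by positivity) (by positivity)]
  have key : ∀ j : ℕ, (j : ℝ) / n * Real.log (j / n) * n = j * Real.log j - j * Real.log n := by
    intro j
    rcases Nat.eq_zero_or_pos j with rfl | hj
    · simp
    · have hj' : (0 : ℝ) < j := by exact_mod_cast hj
      rw [Real.log_div (by positivity) (by positivity)]
      field_simp
  have e1 : (1 + (2 * (k : ℝ) - n) / n) / 2 = k / n := by field_simp; ring
  have e2 : (1 - (2 * (k : ℝ) - n) / n) / 2 = ((n - k : ℕ) : ℝ) / n := by
    rw [Nat.cast_sub hk]; field_simp; ring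
  have k1 := key k
  have k2 := key (n - k)
  have hb : n * binEnt ((2 * (k : ℝ) - n) / n)
      = (k * Real.log k - k * Real.log n)
        + (((n - k : ℕ) : ℝ) * Real.log ((n - k : ℕ) : ℝ) - ((n - k : ℕ) : ℝ) * Real.log n) := by
    unfold binEnt; rw [e1, e2, ← k1, ← k2]; ring
  rw [hb]
  unfold stirB
  have hc : ((n - k : ℕ) : ℝ) = (n : ℝ) - k := by rw [Nat.cast_sub hk]
  rw [hc]
  ring

/-! ### The standard normal distribution -/

lemma exp_decay (N : ℕ) {a : ℝ} (ha : 0 < a) :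
    ∃ C : ℝ, 0 < C ∧ ∀ x : ℝ, 0 ≤ x → (1 + x) ^ N * Real.exp (-(a * x)) ≤ C := by
  refine ⟨N.factorial * Real.exp a / a ^ N, by positivity, fun x hx => ?_⟩
  have h := Real.pow_div_factorial_le_exp (a * (1 + x)) (by positivity) N
  rw [div_le_iff₀ (by positivity), mul_pow] at h
  have e : Real.exp (a * (1 + x)) = Real.exp a * Real.exp (a * x) := by
    rw [← Real.exp_add]; ring_nf
  rw [e] at h
  rw [le_div_iff₀ (by positivity), Real.exp_neg]
  have hp := Real.exp_pos (a * x)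
  calc (1 + x) ^ N * (Real.exp (a * x))⁻¹ * a ^ N
      = (a ^ N * (1 + x) ^ N) * (Real.exp (a * x))⁻¹ := by ring
    _ ≤ (Real.exp a * Real.exp (a * x) * N.factorial) * (Real.exp (a * x))⁻¹ := by gcongr
    _ = N.factorial * Real.exp a := by field_simp

lemma gauss_decay (N : ℕ) {a : ℝ} (ha : 0 < a) :
    ∃ C : ℝ, 0 < C ∧ ∀ x : ℝ, (1 + |x|) ^ N * Real.exp (-(a * x ^ 2)) ≤ C := by
  obtain ⟨C, hC, h⟩ := exp_decay N ha
  refine ⟨C * Real.exp a, by positivity, fun x => ?_⟩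
  have h1 : Real.exp (-(a * x ^ 2)) ≤ Real.exp (-(a * |x|)) * Real.exp a := by
    rw [← Real.exp_add]
    apply Real.exp_le_exp.2
    have : |x| ≤ x ^ 2 + 1 := by
      rw [← sq_abs]; nlinarith [sq_nonneg (|x| - 1), abs_nonneg x]
    nlinarith
  calc _ ≤ (1 + |x|) ^ N * (Real.exp (-(a * |x|)) * Real.exp a) := by gcongr
    _ = (1 + |x|) ^ N * Real.exp (-(a * |x|)) * Real.exp a := by ring
    _ ≤ _ := by gcongr; exact h _ (abs_nonneg x)

/-- The standard normal density. -/
noncomputable def stdPDF (x : ℝ) : ℝ := (√(2 * Real.pi))⁻¹ * Real.exp (-(x ^ 2 / 2))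

lemma stdPDF_eq : stdPDF = gaussianPDFReal 0 1 := by
  ext x; simp [stdPDF, gaussianPDFReal_def, neg_div]

lemma hasDerivAt_stdPDF (x : ℝ) : HasDerivAt stdPDF (-(x * stdPDF x)) x := by
  have h : HasDerivAt (fun y : ℝ => -(y ^ 2 / 2)) (-x) x :=
    ((hasDerivAt_pow 2 x).div_const 2).neg.congr_deriv (by norm_num)
  exact (h.exp.const_mul (√(2 * Real.pi))⁻¹).congr_deriv (by unfold stdPDF; ring)

lemma stdPDF_nonneg (x : ℝ) : 0 ≤ stdPDF x := by unfold stdPDF; positivity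

lemma stdPDF_le (x : ℝ) : stdPDF x ≤ Real.exp (-(1 / 2 * x ^ 2)) := by
  unfold stdPDF
  have h1 : (√(2 * Real.pi))⁻¹ ≤ 1 := by
    apply inv_le_one_of_one_le₀
    rw [Real.one_le_sqrt]
    nlinarith [Real.pi_gt_three]
  have h2 : -(x ^ 2 / 2) = -(1 / 2 * x ^ 2) := by ring
  rw [h2]
  exact mul_le_of_le_one_left (Real.exp_pos _).le h1

lemma continuous_stdPDF : Continuous stdPDF :=
  continuous_iff_continuousAt.2 fun x => (hasDerivAt_stdPDF x).continuousAt

lemma stdNormalCDF_eq_integral_s9 (z : ℝ) : stdNormalCDF z = ∫ x in Set.Iic z, stdPDF x := by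
  unfold stdNormalCDF
  rw [gaussianReal_apply_eq_integral 0 one_ne_zero, stdPDF_eq, ENNReal.toReal_ofReal]
  exact integral_nonneg fun x => gaussianPDFReal_nonneg 0 1 x

lemma hasDerivAt_stdNormalCDF (z : ℝ) : HasDerivAt stdNormalCDF (stdPDF z) z := by
  have hPDF : Integrable stdPDF := by rw [stdPDF_eq]; exact integrable_gaussianPDFReal 0 1
  have h := (continuous_stdPDF.integral_hasStrictDerivAt 0 z).hasDerivAt.const_add (stdNormalCDF 0)
  have e : stdNormalCDF = fun u => stdNormalCDF 0 + ∫ x in (0 : ℝ)..u, stdPDF x := by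
    ext u
    rw [← intervalIntegral.integral_Iic_sub_Iic hPDF.integrableOn hPDF.integrableOn,
      stdNormalCDF_eq_integral_s9, stdNormalCDF_eq_integral_s9]
    ring
  rw [e]; exact h

lemma stdNormalCDF_mono {a b : ℝ} (h : a ≤ b) : stdNormalCDF a ≤ stdNormalCDF b := by
  have : (gaussianReal 0 1).real (Set.Iic a) ≤ (gaussianReal 0 1).real (Set.Iic b) :=
    measureReal_mono (Set.Iic_subset_Iic.2 h)
  exact this

lemma stdNormalCDF_le_exp {z : ℝ} (hz : z ≤ 0) :
    stdNormalCDF z ≤ Real.exp (-(1 / 2 * z ^ 2)) := by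
  have h := measure_le_le_exp_mul_mgf (X := id) (μ := gaussianReal 0 1) (t := z) z hz
    (integrable_exp_mul_gaussianReal z)
  rw [mgf_id_gaussianReal, ← Real.exp_add] at h
  refine (le_trans (le_of_eq ?_) h).trans (le_of_eq ?_)
  · rfl
  · congr 1; simp; ring

lemma one_sub_stdNormalCDF_le_exp {z : ℝ} (hz : 0 ≤ z) :
    1 - stdNormalCDF z ≤ Real.exp (-(1 / 2 * z ^ 2)) := by
  have h := measure_ge_le_exp_mul_mgf (X := id) (μ := gaussianReal 0 1) (t := z) z hz
    (integrable_exp_mul_gaussianReal z)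
  rw [mgf_id_gaussianReal, ← Real.exp_add] at h
  have h0 : 1 - stdNormalCDF z ≤ (gaussianReal 0 1).real {ω | z ≤ id ω} := by
    have h1 : (gaussianReal 0 1).real (Set.Iic z)ᶜ = 1 - stdNormalCDF z :=
      probReal_compl_eq_one_sub measurableSet_Iic
    rw [← h1]
    refine measureReal_mono (fun x hx => ?_) (measure_ne_top _ _)
    simp only [Set.mem_compl_iff, Set.mem_Iic, not_le] at hx
    exact hx.le
  refine (h0.trans h).trans (le_of_eq ?_)
  congr 1; simp; ring

/-- Polynomial tail bounds for the normal distribution. -/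
lemma stdNormal_tail (N : ℕ) : ∃ C : ℝ, 0 < C ∧
    (∀ z ≤ 0, stdNormalCDF z ≤ C / (1 + |z|) ^ N) ∧
    (∀ z, 0 ≤ z → 1 - stdNormalCDF z ≤ C / (1 + |z|) ^ N) := by
  obtain ⟨C, hC, h⟩ := gauss_decay N (a := 1 / 2) (by norm_num)
  refine ⟨C, hC, fun z hz => ?_, fun z hz => ?_⟩
  · rw [le_div_iff₀ (by positivity), mul_comm]
    refine le_trans ?_ (h z)
    gcongr; exact stdNormalCDF_le_exp hz
  · rw [le_div_iff₀ (by positivity), mul_comm]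
    refine le_trans ?_ (h z)
    gcongr; exact one_sub_stdNormalCDF_le_exp hz

lemma one_add_abs_le {x s H : ℝ} (h : |s - x| ≤ H) : 1 + |x| ≤ (1 + H) * (1 + |s|) := by
  have hH : 0 ≤ H := (abs_nonneg _).trans h
  have : |x| ≤ |s| + |s - x| := by
    have := abs_sub_abs_le_abs_sub x s
    rw [abs_sub_comm] at this; linarith
  nlinarith [abs_nonneg s]

lemma abs_sub_le_of_deriv {f f' : ℝ → ℝ} {a b C : ℝ}
    (hd : ∀ t ∈ Set.uIcc a b, HasDerivAt f (f' t) t)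
    (hb : ∀ t ∈ Set.uIcc a b, |f' t| ≤ C) : |f b - f a| ≤ C * |b - a| :=
  Convex.norm_image_sub_le_of_norm_hasDerivWithin_le (s := Set.uIcc a b)
    (fun t ht => (hd t ht).hasDerivWithinAt) (fun t ht => hb t ht)
    (convex_uIcc a b) Set.left_mem_uIcc Set.right_mem_uIcc

lemma abs_sub_le_of_mem_uIcc {a b t : ℝ} (ht : t ∈ Set.uIcc a b) : |t - a| ≤ |b - a| :=
  Set.abs_sub_left_of_mem_uIcc ht

/-- First-order expansion of the normal distribution function, with decay in the base point. -/
lemma stdNormal_cell (H : ℝ) (hH : 0 < H) : ∃ C : ℝ, 0 < C ∧ ∀ x h : ℝ, 0 ≤ h → h ≤ H →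
    |stdNormalCDF (x + h) - stdNormalCDF x - h * stdPDF x| ≤ C * h ^ 2 / (1 + |x|) ^ 3 := by
  obtain ⟨C, hC, hdec⟩ := gauss_decay 4 (a := 1 / 2) (by norm_num)
  refine ⟨C * (1 + H) ^ 3, by positivity, fun x h h0 hh => ?_⟩
  have hder : ∀ t, |t - x| ≤ H → |-(t * stdPDF t)| ≤ C * (1 + H) ^ 3 / (1 + |x|) ^ 3 := by
    intro t ht
    have h1 : |-(t * stdPDF t)| * (1 + |t|) ^ 3 ≤ C := by
      rw [abs_neg, abs_mul, abs_of_nonneg (stdPDF_nonneg t)]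
      calc |t| * stdPDF t * (1 + |t|) ^ 3
          ≤ (1 + |t|) * Real.exp (-(1 / 2 * t ^ 2)) * (1 + |t|) ^ 3 := by
            gcongr
            · exact stdPDF_nonneg t
            · linarith
            · exact stdPDF_le t
        _ = (1 + |t|) ^ 4 * Real.exp (-(1 / 2 * t ^ 2)) := by ring
        _ ≤ C := hdec t
    rw [le_div_iff₀ (by positivity)]
    calc |-(t * stdPDF t)| * (1 + |x|) ^ 3
        ≤ |-(t * stdPDF t)| * ((1 + H) * (1 + |t|)) ^ 3 := by
          gcongr; exact one_add_abs_le ht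
      _ = (|-(t * stdPDF t)| * (1 + |t|) ^ 3) * (1 + H) ^ 3 := by ring
      _ ≤ _ := by gcongr
  have hxh : |x + h - x| = h := by rw [add_sub_cancel_left, abs_of_nonneg h0]
  have hp : ∀ t ∈ Set.uIcc x (x + h), |stdPDF t - stdPDF x|
      ≤ C * (1 + H) ^ 3 / (1 + |x|) ^ 3 * h := by
    intro t ht
    have ht' := abs_sub_le_of_mem_uIcc ht
    rw [hxh] at ht'
    refine (abs_sub_le_of_deriv (fun s _ => hasDerivAt_stdPDF s) (fun s hs => hder s ?_)).trans ?_
    · exact (abs_sub_le_of_mem_uIcc hs).trans (ht'.trans hh)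
    · gcongr
  have := abs_sub_le_of_deriv (f := fun t => stdNormalCDF t - t * stdPDF x)
    (f' := fun t => stdPDF t - stdPDF x) (a := x) (b := x + h)
    (fun t _ => by
      exact ((hasDerivAt_stdNormalCDF t).sub
        ((hasDerivAt_id t).mul_const (stdPDF x))).congr_deriv (by simp)) hp
  rw [hxh] at this
  refine (le_of_eq ?_).trans (this.trans (le_of_eq ?_))
  · congr 1; ring
  · ring

lemma stdNormal_lip (H : ℝ) (hH : 0 < H) : ∃ C : ℝ, 0 < C ∧ ∀ x h : ℝ, 0 ≤ h → h ≤ H →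
    |stdNormalCDF (x + h) - stdNormalCDF x| ≤ C * h / (1 + |x|) := by
  obtain ⟨C, hC, hdec⟩ := gauss_decay 1 (a := 1 / 2) (by norm_num)
  refine ⟨C * (1 + H), by positivity, fun x h h0 hh => ?_⟩
  have hxh : |x + h - x| = h := by rw [add_sub_cancel_left, abs_of_nonneg h0]
  have := abs_sub_le_of_deriv (f := stdNormalCDF) (f' := stdPDF) (a := x) (b := x + h)
    (C := C * (1 + H) / (1 + |x|))
    (fun t _ => hasDerivAt_stdNormalCDF t) (fun t ht => by
      have ht' := abs_sub_le_of_mem_uIcc ht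
      rw [hxh] at ht'
      rw [le_div_iff₀ (by positivity), abs_of_nonneg (stdPDF_nonneg t)]
      calc stdPDF t * (1 + |x|)
          ≤ Real.exp (-(1 / 2 * t ^ 2)) * ((1 + H) * (1 + |t|)) := by
            gcongr
            · exact stdPDF_le t
            · exact one_add_abs_le (ht'.trans hh)
        _ = ((1 + |t|) ^ 1 * Real.exp (-(1 / 2 * t ^ 2))) * (1 + H) := by ring
        _ ≤ _ := by gcongr; exact hdec t)
  rw [hxh] at this
  refine this.trans (le_of_eq ?_)
  ring

/-- Riemann sums of `1/(1+|x|)²` over an arithmetic progression are bounded, by comparison with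
the increments of `arctan`. -/
lemma lattice_sum (H : ℝ) (hH : 0 < H) : ∃ C : ℝ, 0 < C ∧ ∀ (x0 h : ℝ) (n : ℕ), 0 < h → h ≤ H →
    ∑ k ∈ Finset.range n, h / (1 + |x0 + h * k|) ^ 2 ≤ C := by
  refine ⟨(1 + H) ^ 2 * Real.pi, by positivity, fun x0 h n h0 hh => ?_⟩
  have hstep : ∀ k : ℕ, h / (1 + |x0 + h * k|) ^ 2
      ≤ (1 + H) ^ 2 * (Real.arctan (x0 + h * (k + 1 : ℕ)) - Real.arctan (x0 + h * k)) := by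
    intro k
    set x := x0 + h * k
    have hx : x0 + h * (k + 1 : ℕ) = x + h := by simp only [x]; push_cast; ring
    rw [hx]
    obtain ⟨t, ht, he⟩ := exists_hasDerivAt_eq_slope Real.arctan (fun t => 1 / (1 + t ^ 2))
      (a := x) (b := x + h) (by linarith) Real.continuous_arctan.continuousOn
      (fun t _ => Real.hasDerivAt_arctan t)
    have he' : Real.arctan (x + h) - Real.arctan x = h / (1 + t ^ 2) := by
      rw [add_sub_cancel_left, eq_div_iff h0.ne'] at he
      rw [← he]; ring
    rw [he']
    have h1 : 1 + |t| ≤ (1 + H) * (1 + |x|) :=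
      one_add_abs_le (by rw [abs_le]; constructor <;> linarith [ht.1, ht.2])
    have h2 : 1 + t ^ 2 ≤ (1 + H) ^ 2 * (1 + |x|) ^ 2 := by
      rw [← mul_pow]
      refine le_trans ?_ (pow_le_pow_left₀ (by positivity) h1 2)
      rw [← sq_abs t]; nlinarith [abs_nonneg t]
    rw [← mul_div_assoc, div_le_div_iff₀ (by positivity) (by positivity)]
    nlinarith
  calc _ ≤ ∑ k ∈ Finset.range n,
        (1 + H) ^ 2 * (Real.arctan (x0 + h * (k + 1 : ℕ)) - Real.arctan (x0 + h * k)) :=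
        Finset.sum_le_sum fun k _ => hstep k
    _ = (1 + H) ^ 2 * (Real.arctan (x0 + h * n) - Real.arctan (x0 + h * (0 : ℕ))) := by
        rw [← Finset.mul_sum, Finset.sum_range_sub (fun k : ℕ => Real.arctan (x0 + h * k))]
    _ ≤ _ := by
        gcongr
        have h1 := Real.arctan_lt_pi_div_two (x0 + h * n)
        have h2 := Real.neg_pi_div_two_lt_arctan (x0 + h * (0 : ℕ))
        generalize Real.arctan (x0 + h * (0 : ℕ)) = b at *
        generalize Real.arctan (x0 + h * n) = a at *
        linarith

/-! ### The free energy near and away from its minimizer -/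

lemma hasDerivAt_phiKJ_s9 (K J : ℝ) {x : ℝ} (hx : x ∈ Set.Ioo (-1 : ℝ) 1) :
    HasDerivAt (phiKJ K J)
      ((Real.log ((1 + x) / 2) - Real.log ((1 - x) / 2)) / 2 - K * x ^ 2 - J * x) x := by
  have h1 : (0 : ℝ) < (1 + x) / 2 := by linarith [hx.1]
  have h2 : (0 : ℝ) < (1 - x) / 2 := by linarith [hx.2]
  have d1 : HasDerivAt (fun y : ℝ => (1 + y) / 2) (1 / 2) x :=
    ((hasDerivAt_id x).const_add 1).div_const 2
  have d2 : HasDerivAt (fun y : ℝ => (1 - y) / 2) (-1 / 2) x :=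
    ((hasDerivAt_id x).const_sub 1).div_const 2
  have e1 := d1.mul (d1.log h1.ne')
  have e2 := d2.mul (d2.log h2.ne')
  have e3 := (hasDerivAt_pow 3 x).const_mul (K / 3)
  have e4 := (hasDerivAt_pow 2 x).const_mul (J / 2)
  refine (((e2.add e1).sub e3).sub e4).congr_deriv ?_
  have h1' : (1 + x) ≠ 0 := by linarith
  have h2' : (1 - x) ≠ 0 := by linarith
  push_cast
  field_simp
  ring

lemma hasDerivAt_phiKJ' (K J : ℝ) {x : ℝ} (hx : x ∈ Set.Ioo (-1 : ℝ) 1) :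
    HasDerivAt (fun x =>
      (Real.log ((1 + x) / 2) - Real.log ((1 - x) / 2)) / 2 - K * x ^ 2 - J * x)
      (1 / (1 - x ^ 2) - 2 * K * x - J) x := by
  have h1 : (0 : ℝ) < (1 + x) / 2 := by linarith [hx.1]
  have h2 : (0 : ℝ) < (1 - x) / 2 := by linarith [hx.2]
  have d1 : HasDerivAt (fun y : ℝ => (1 + y) / 2) (1 / 2) x :=
    ((hasDerivAt_id x).const_add 1).div_const 2
  have d2 : HasDerivAt (fun y : ℝ => (1 - y) / 2) (-1 / 2) x :=
    ((hasDerivAt_id x).const_sub 1).div_const 2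
  have e3 := (hasDerivAt_pow 2 x).const_mul K
  have e4 := (hasDerivAt_id x).const_mul J
  refine (((((d1.log h1.ne').sub (d2.log h2.ne')).div_const 2).sub e3).sub e4).congr_deriv ?_
  have h1' : (1 + x) ≠ 0 := by linarith
  have h2' : (1 - x) ≠ 0 := by linarith
  have h3 : 1 - x ^ 2 ≠ 0 := by
    have : 1 - x ^ 2 = (1 + x) * (1 - x) := by ring
    rw [this]; exact mul_ne_zero h1' h2'
  push_cast
  field_simp
  ring

lemma iteratedDeriv_two_phiKJ_s9 (K J : ℝ) {x : ℝ} (hx : x ∈ Set.Ioo (-1 : ℝ) 1) :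
    iteratedDeriv 2 (phiKJ K J) x = 1 / (1 - x ^ 2) - 2 * K * x - J := by
  rw [iteratedDeriv_succ, iteratedDeriv_one]
  have : deriv (phiKJ K J) =ᶠ[nhds x] fun x =>
      (Real.log ((1 + x) / 2) - Real.log ((1 - x) / 2)) / 2 - K * x ^ 2 - J * x := by
    filter_upwards [isOpen_Ioo.mem_nhds hx] with y hy
    exact (hasDerivAt_phiKJ_s9 K J hy).deriv
  rw [this.deriv_eq]
  exact (hasDerivAt_phiKJ' K J hx).deriv

/-- Second-order Taylor expansion of `φ` at its minimizer. -/
lemma phi_local (K J m : ℝ) (hm : m ∈ Set.Ioo (-1 : ℝ) 1)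
    (hmin : ∀ y ∈ Set.Icc (-1 : ℝ) 1, phiKJ K J m ≤ phiKJ K J y)
    (hconv : 0 < iteratedDeriv 2 (phiKJ K J) m) :
    ∃ δ L : ℝ, 0 < δ ∧ 0 < L ∧ δ ≤ (1 - |m|) / 2 ∧ L * δ ≤ iteratedDeriv 2 (phiKJ K J) m / 4 ∧
      ∀ y, |y - m| ≤ δ →
        |phiKJ K J y - phiKJ K J m - iteratedDeriv 2 (phiKJ K J) m / 2 * (y - m) ^ 2|
          ≤ L * |y - m| ^ 3 := by
  rw [iteratedDeriv_two_phiKJ_s9 K J hm] at *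
  set D := 1 / (1 - m ^ 2) - 2 * K * m - J with hD
  have hm1 : |m| < 1 := abs_lt.2 hm
  set ρ := (1 - |m|) / 2 with hρ
  have hρ0 : 0 < ρ := by linarith
  set L := 2 / ρ ^ 2 + 2 * |K| with hL
  have hL0 : 0 < L := by positivity
  have hin : ∀ t, |t - m| ≤ ρ → |t| ≤ 1 - ρ := by
    intro t ht
    have := abs_sub_abs_le_abs_sub t m
    linarith
  have hIoo : ∀ t, |t - m| ≤ ρ → t ∈ Set.Ioo (-1 : ℝ) 1 := fun t ht =>
    abs_lt.1 (lt_of_le_of_lt (hin t ht) (by linarith))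
  have hsq : ∀ t, |t - m| ≤ ρ → ρ ≤ 1 - t ^ 2 := by
    intro t ht
    have := hin t ht
    rw [← sq_abs]
    nlinarith [abs_nonneg t]
  have hlip : ∀ t, |t - m| ≤ ρ → |(1 / (1 - t ^ 2) - 2 * K * t - J) - D| ≤ L * |t - m| := by
    intro t ht
    have a1 := hsq t ht
    have a2 := hsq m (by simpa using hρ0.le)
    have p1 : 0 < 1 - t ^ 2 := by linarith
    have p2 : 0 < 1 - m ^ 2 := by linarith
    have e : (1 / (1 - t ^ 2) - 2 * K * t - J) - D
        = (t - m) * ((t + m) / ((1 - t ^ 2) * (1 - m ^ 2)) - 2 * K) := by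
      rw [hD]; field_simp; ring
    rw [e, abs_mul, mul_comm]
    gcongr
    refine (abs_sub _ _).trans ?_
    rw [hL, abs_mul, abs_div]
    have h1 : |t + m| ≤ 2 := by
      have := abs_add_le t m; have := hin t ht; linarith
    have h2 : ρ ^ 2 ≤ |(1 - t ^ 2) * (1 - m ^ 2)| := by
      rw [abs_of_pos (by positivity), sq]; gcongr
    have h3 : |(2 : ℝ)| = 2 := by norm_num
    rw [h3]
    gcongr
  have hd0 : (Real.log ((1 + m) / 2) - Real.log ((1 - m) / 2)) / 2 - K * m ^ 2 - J * m = 0 := by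
    refine IsLocalMin.hasDerivAt_eq_zero ?_ (hasDerivAt_phiKJ_s9 K J hm)
    filter_upwards [isOpen_Ioo.mem_nhds hm] with y hy
    exact hmin y (Set.Ioo_subset_Icc_self hy)
  have hfirst : ∀ t, |t - m| ≤ ρ →
      |(Real.log ((1 + t) / 2) - Real.log ((1 - t) / 2)) / 2 - K * t ^ 2 - J * t - D * (t - m)|
        ≤ L * |t - m| * |t - m| := by
    intro t ht
    have := abs_sub_le_of_deriv (a := m) (b := t) (C := L * |t - m|)
      (f := fun t => (Real.log ((1 + t) / 2) - Real.log ((1 - t) / 2)) / 2 - K * t ^ 2 - J * t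
        - D * (t - m))
      (f' := fun t => 1 / (1 - t ^ 2) - 2 * K * t - J - D)
      (fun s hs => by
        have hs' := (abs_sub_le_of_mem_uIcc hs).trans ht
        exact ((hasDerivAt_phiKJ' K J (hIoo s hs')).sub
          (((hasDerivAt_id s).sub_const m).const_mul D)).congr_deriv (by simp))
      (fun s hs => by
        have hs' := abs_sub_le_of_mem_uIcc hs
        exact (hlip s (hs'.trans ht)).trans (by gcongr))
    simpa [hd0] using this
  have hsecond : ∀ t, |t - m| ≤ ρ →
      |phiKJ K J t - phiKJ K J m - D / 2 * (t - m) ^ 2| ≤ L * |t - m| ^ 3 := by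
    intro t ht
    have := abs_sub_le_of_deriv (a := m) (b := t) (C := L * |t - m| * |t - m|)
      (f := fun t => phiKJ K J t - D / 2 * (t - m) ^ 2)
      (f' := fun t => (Real.log ((1 + t) / 2) - Real.log ((1 - t) / 2)) / 2 - K * t ^ 2 - J * t
        - D * (t - m))
      (fun s hs => by
        have hs' := (abs_sub_le_of_mem_uIcc hs).trans ht
        exact ((hasDerivAt_phiKJ_s9 K J (hIoo s hs')).sub
          ((((hasDerivAt_id s).sub_const m).pow 2).const_mul (D / 2))).congr_deriv
            (by simp; ring))
      (fun s hs => by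
        have hs' := abs_sub_le_of_mem_uIcc hs
        exact (hfirst s (hs'.trans ht)).trans (by gcongr))
    refine (le_of_eq ?_).trans (this.trans (le_of_eq ?_))
    · congr 1; simp; ring
    · ring
  refine ⟨min ρ (D / 4 / L), L, by positivity, hL0, min_le_left _ _, ?_, fun y hy =>
    hsecond y (hy.trans (min_le_left _ _))⟩
  calc L * min ρ (D / 4 / L) ≤ L * (D / 4 / L) := by gcongr; exact min_le_right _ _
    _ = D / 4 := by field_simp

/-- Away from the unique minimizer, `φ` exceeds its minimum by a fixed amount. -/
lemma phi_gap (K J m δ : ℝ) (hδ : 0 < δ)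
    (hmin : ∀ y ∈ Set.Icc (-1 : ℝ) 1, phiKJ K J m ≤ phiKJ K J y)
    (huniq : ∀ y ∈ Set.Icc (-1 : ℝ) 1, phiKJ K J y = phiKJ K J m → y = m) :
    ∃ η : ℝ, 0 < η ∧ ∀ y ∈ Set.Icc (-1 : ℝ) 1, δ ≤ |y - m| →
      η ≤ phiKJ K J y - phiKJ K J m := by
  have hc : IsCompact (Set.Icc (-1 : ℝ) 1 ∩ {y | δ ≤ |y - m|}) :=
    isCompact_Icc.inter_right (isClosed_le continuous_const (by fun_prop))
  rcases (Set.Icc (-1 : ℝ) 1 ∩ {y | δ ≤ |y - m|}).eq_empty_or_nonempty with he | hne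
  · refine ⟨1, one_pos, fun y hy hyd => ?_⟩
    have : y ∈ Set.Icc (-1 : ℝ) 1 ∩ {y | δ ≤ |y - m|} := ⟨hy, hyd⟩
    rw [he] at this; exact this.elim
  · obtain ⟨y0, hy0, hle⟩ := hc.exists_isMinOn hne (continuous_phiKJ K J).continuousOn
    refine ⟨phiKJ K J y0 - phiKJ K J m, ?_, fun y hy hyd => ?_⟩
    · have h1 := hmin y0 hy0.1
      rcases h1.lt_or_eq with h | h
      · linarith
      · have h2 := huniq y0 hy0.1 h.symm
        have h3 : δ ≤ |y0 - m| := hy0.2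
        rw [h2] at h3; simp at h3; linarith
    · have : phiKJ K J y0 ≤ phiKJ K J y := hle ⟨hy, hyd⟩
      linarith

/-! ### Comparison of the point weights with the Gaussian -/

/-- An integer index whose magnetization is within `2/n` of `m`. -/
noncomputable def midIdx (m : ℝ) (n : ℕ) : ℕ := ⌊(n : ℝ) * (1 + m) / 2⌋₊

/-- The unnormalized probability of `S_n = 2k − n`, rescaled so as to be close to
`exp (−x²/2)` at the normalized value `x` of `2k − n`. -/
noncomputable def wgt (K J m : ℝ) (n k : ℕ) : ℝ :=
  Real.exp (-(n * (phiKJ K J ((2 * k - n) / n) - phiKJ K J m))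
    + (stirB (midIdx m n) - stirB k + (stirB (n - midIdx m n) - stirB (n - k))))

lemma abs_exp_sub_one_le' (E : ℝ) : |Real.exp E - 1| ≤ |E| * Real.exp |E| := by
  have h1 := Real.add_one_le_exp E
  have h2 := Real.add_one_le_exp (-E)
  have h3 : Real.exp E * Real.exp (-E) = 1 := by rw [← Real.exp_add]; simp
  have h4 : Real.exp E ≤ Real.exp |E| := Real.exp_le_exp.2 (le_abs_self E)
  have h5 : (1 : ℝ) ≤ Real.exp |E| := Real.one_le_exp (abs_nonneg E)
  have p := Real.exp_pos E
  rw [abs_le]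
  constructor
  · have := neg_abs_le E
    nlinarith [abs_nonneg E]
  · have a1 : Real.exp E - 1 ≤ E * Real.exp E := by nlinarith
    have a2 : E * Real.exp E ≤ |E| * Real.exp E := by gcongr; exact le_abs_self E
    have a3 : |E| * Real.exp E ≤ |E| * Real.exp |E| := by gcongr
    linarith

lemma midIdx_le {m : ℝ} (hm : m ∈ Set.Ioo (-1 : ℝ) 1) (n : ℕ) : midIdx m n ≤ n := by
  have hn : (0 : ℝ) ≤ n := Nat.cast_nonneg n
  refine Nat.floor_le_of_le ?_
  nlinarith [hm.2]

/-- Near the minimizer the factorial corrections vary slowly. -/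
lemma corr_le {m δ : ℝ} (hm : m ∈ Set.Ioo (-1 : ℝ) 1) (hδ : 0 < δ) (hδm : δ ≤ (1 - |m|) / 2)
    {n k : ℕ} (hn : 1 ≤ n) (hk : k ≤ n) (hy : |(2 * (k : ℝ) - n) / n - m| ≤ δ) :
    |stirB (midIdx m n) - stirB k + (stirB (n - midIdx m n) - stirB (n - k))|
      ≤ (2 * |(2 * (k : ℝ) - n) / n - m| + 4 / n) / δ := by
  have hn' : (0 : ℝ) < n := by exact_mod_cast hn
  set k0 := midIdx m n with hk0
  have hk0n : k0 ≤ n := midIdx_le hm n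
  set y := (2 * (k : ℝ) - n) / n - m with hydef
  have hky : (k : ℝ) = n * (1 + m + y) / 2 := by rw [hydef]; field_simp; ring
  have hfl : (k0 : ℝ) ≤ n * (1 + m) / 2 := Nat.floor_le (by nlinarith [hm.1])
  have hfl2 : (n : ℝ) * (1 + m) / 2 < k0 + 1 := Nat.lt_floor_add_one _
  have hma := abs_le.1 (le_of_eq (rfl : |m| = |m|))
  have hya := abs_le.1 hy
  have ha : 0 < n * δ / 2 := by positivity
  have c1 : n * δ / 2 ≤ (k0 : ℝ) + 1 := by nlinarith
  have c2 : n * δ / 2 ≤ (k : ℝ) + 1 := by rw [hky]; nlinarith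
  have c3 : n * δ / 2 ≤ ((n - k0 : ℕ) : ℝ) + 1 := by rw [Nat.cast_sub hk0n]; nlinarith
  have c4 : n * δ / 2 ≤ ((n - k : ℕ) : ℝ) + 1 := by rw [Nat.cast_sub hk, hky]; nlinarith
  have b1 := abs_stirB_sub_le ha c1 c2
  have b2 := abs_stirB_sub_le ha c3 c4
  have e2 : ((n - k0 : ℕ) : ℝ) - ((n - k : ℕ) : ℝ) = -((k0 : ℝ) - k) := by
    rw [Nat.cast_sub hk0n, Nat.cast_sub hk]; ring
  rw [e2, abs_neg] at b2
  have hd : |(k0 : ℝ) - k| ≤ n * |y| / 2 + 1 := by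
    have e : (k0 : ℝ) - k = -(n * y / 2) + (k0 - n * (1 + m) / 2) := by rw [hky]; ring
    rw [e]
    refine (abs_add_le _ _).trans ?_
    have : |-(n * y / 2)| = n * |y| / 2 := by
      rw [abs_neg, abs_div, abs_mul, abs_of_pos hn']; norm_num
    rw [this]
    have : |(k0 : ℝ) - n * (1 + m) / 2| ≤ 1 := by rw [abs_le]; constructor <;> linarith
    linarith
  calc _ ≤ |(k0 : ℝ) - k| / (n * δ / 2) + |(k0 : ℝ) - k| / (n * δ / 2) :=
        (abs_add_le _ _).trans (add_le_add b1 b2)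
    _ ≤ (n * |y| / 2 + 1) / (n * δ / 2) + (n * |y| / 2 + 1) / (n * δ / 2) := by gcongr
    _ = _ := by field_simp; ring

lemma normalized_eq {D m : ℝ} (hD : 0 < D) {n : ℕ} (hn : 1 ≤ n) (k : ℕ) :
    (2 * (k : ℝ) - n - n * m) / √(n / D) = √D * √n * ((2 * (k : ℝ) - n) / n - m) := by
  have hn' : (0 : ℝ) < n := by exact_mod_cast hn
  have hs : (√n) ^ 2 = (n : ℝ) := Real.sq_sqrt hn'.le
  have hs0 : 0 < √(n : ℝ) := Real.sqrt_pos.2 hn'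
  have hq0 : 0 < √D := Real.sqrt_pos.2 hD
  rw [Real.sqrt_div hn'.le]
  have : (2 * (k : ℝ) - n) / n - m = (2 * (k : ℝ) - n - n * m) / (√n) ^ 2 := by
    rw [hs]; field_simp
  rw [this]
  field_simp

set_option maxHeartbeats 1000000 in
/-- The rescaled point weights are Gaussian up to a relative error of order `n^{-1/2}`, with
polynomial decay in the normalized magnetization. -/
lemma wgt_close (K J m : ℝ) (hm : m ∈ Set.Ioo (-1 : ℝ) 1)
    (hmin : ∀ y ∈ Set.Icc (-1 : ℝ) 1, phiKJ K J m ≤ phiKJ K J y)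
    (huniq : ∀ y ∈ Set.Icc (-1 : ℝ) 1, phiKJ K J y = phiKJ K J m → y = m)
    (hconv : 0 < iteratedDeriv 2 (phiKJ K J) m) :
    ∃ C : ℝ, 0 < C ∧ ∀ n k : ℕ, 1 ≤ n → k ≤ n → ∀ x : ℝ,
      x = (2 * (k : ℝ) - n - n * m) / √(n / iteratedDeriv 2 (phiKJ K J) m) →
      |wgt K J m n k - Real.exp (-(x ^ 2 / 2))| ≤ C / ((1 + |x|) ^ 3 * √n) := by
  obtain ⟨δ, L, hδ, hL, hδm, hLδ, hloc⟩ := phi_local K J m hm hmin hconv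
  obtain ⟨η, hη, hgap⟩ := phi_gap K J m δ hδ hmin huniq
  generalize iteratedDeriv 2 (phiKJ K J) m = D at *
  obtain ⟨C4, hC4, hdec4⟩ := gauss_decay 6 (a := 1 / 4) (by norm_num)
  obtain ⟨C5, hC5, hdec5⟩ := exp_decay 4 hη
  obtain ⟨C6, hC6, hdec6⟩ := gauss_decay 4 (a := 1 / 2) (by norm_num)
  have hq0 : 0 < √D := Real.sqrt_pos.2 hconv
  have hq2 : (√D) ^ 2 = D := Real.sq_sqrt hconv.le
  set q := √D with hq
  set C1 := (2 * δ + 4) / δ with hC1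
  set C3 := L / q ^ 3 + (2 / q + 4) / δ with hC3
  have hC1p : 0 < C1 := by positivity
  have hC3p : 0 < C3 := by positivity
  set Cn := Real.exp C1 * C3 * C4 with hCn
  set Cf := Real.exp 2 * (1 + 2 * q) ^ 3 * C5 + C6 / (q * δ) with hCf
  have hCnp : 0 < Cn := by positivity
  have hCfp : 0 < Cf := by positivity
  refine ⟨Cn + Cf, by positivity, fun n k hn hk x hx => ?_⟩
  have hn' : (0 : ℝ) < n := by exact_mod_cast hn
  have hn1 : (1 : ℝ) ≤ n := by exact_mod_cast hn
  rw [normalized_eq hconv hn, ← hq] at hx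
  have hs2 : (√n) ^ 2 = (n : ℝ) := Real.sq_sqrt hn'.le
  have hs1 : 1 ≤ √(n : ℝ) := by rw [Real.one_le_sqrt]; exact hn1
  set s := √(n : ℝ) with hs
  have hs0 : 0 < s := by linarith
  set y := (2 * (k : ℝ) - n) / n - m with hy
  have hmk : (2 * (k : ℝ) - n) / n = m + y := by rw [hy]; ring
  have hx2 : x ^ 2 = D * n * y ^ 2 := by rw [hx, ← hq2, ← hs2]; ring
  have hxa : |x| = q * s * |y| := by
    rw [hx, abs_mul, abs_of_pos (by positivity)]
  have hkn : (k : ℝ) ≤ n := by exact_mod_cast hk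
  have hk0 : (0 : ℝ) ≤ k := Nat.cast_nonneg k
  rcases le_or_gt |y| δ with hnear | hfar
  · have hcorr := corr_le hm hδ hδm hn hk hnear
    have hl := hloc (m + y) (by simpa using hnear)
    rw [add_sub_cancel_left] at hl
    unfold wgt
    rw [hmk] at hcorr ⊢
    generalize stirB (midIdx m n) - stirB k + (stirB (n - midIdx m n) - stirB (n - k)) = e at *
    rw [add_sub_cancel_left] at hcorr
    set E := -(n * (phiKJ K J (m + y) - phiKJ K J m - D / 2 * y ^ 2)) + e with hE
    have hw : Real.exp (-(n * (phiKJ K J (m + y) - phiKJ K J m)) + e)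
        = Real.exp (-(x ^ 2 / 2)) * Real.exp E := by
      rw [← Real.exp_add]; congr 1; rw [hE, hx2]; ring
    have hE1 : |E| ≤ n * (L * |y| ^ 3) + |e| := by
      refine (abs_add_le _ _).trans ?_
      rw [abs_neg, abs_mul, abs_of_pos hn']
      gcongr
    have hya := abs_nonneg y
    have hEb : |E| ≤ x ^ 2 / 4 + C1 := by
      have t1 : n * (L * |y| ^ 3) ≤ x ^ 2 / 4 := by
        have : L * |y| ≤ D / 4 := (by gcongr : L * |y| ≤ L * δ).trans hLδ
        calc n * (L * |y| ^ 3) = (L * |y|) * (n * |y| ^ 2) := by ring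
          _ ≤ (D / 4) * (n * |y| ^ 2) := by gcongr
          _ = x ^ 2 / 4 := by rw [hx2, sq_abs]; ring
      have t2 : |e| ≤ C1 := by
        refine hcorr.trans ?_
        rw [hC1]
        have : 4 / (n : ℝ) ≤ 4 := div_le_self (by norm_num) hn1
        gcongr
      linarith
    have hEs : |E| ≤ C3 * (1 + |x|) ^ 3 / s := by
      have t1 : n * (L * |y| ^ 3) = L / q ^ 3 * |x| ^ 3 / s := by
        rw [hxa, ← hs2]; field_simp
      have t2 : |e| ≤ (2 / q + 4) / δ * (1 + |x|) / s := by
        refine hcorr.trans ?_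
        have a1 : 2 * |y| = 2 / q * |x| / s := by rw [hxa]; field_simp
        have a2 : 4 / (n : ℝ) ≤ 4 / s := by
          rw [← hs2]; gcongr; nlinarith
        calc (2 * |y| + 4 / n) / δ ≤ (2 / q * |x| / s + 4 / s) / δ := by rw [a1]; gcongr
          _ ≤ ((2 / q + 4) * (1 + |x|) / s) / δ := by
            gcongr
            rw [← add_div]
            gcongr
            have : 0 ≤ 2 / q := by positivity
            nlinarith [abs_nonneg x]
          _ = _ := by ring
      have t3 : |x| ^ 3 ≤ (1 + |x|) ^ 3 := by gcongr; linarith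
      have t4 : (1 + |x|) ≤ (1 + |x|) ^ 3 := le_self_pow₀ (by linarith [abs_nonneg x]) (by norm_num)
      calc |E| ≤ L / q ^ 3 * |x| ^ 3 / s + (2 / q + 4) / δ * (1 + |x|) / s := by
            rw [← t1]; linarith
        _ ≤ L / q ^ 3 * (1 + |x|) ^ 3 / s + (2 / q + 4) / δ * (1 + |x|) ^ 3 / s := by gcongr
        _ = _ := by rw [hC3]; ring
    rw [hw]
    have e1 : Real.exp (-(x ^ 2 / 2)) * Real.exp E - Real.exp (-(x ^ 2 / 2))
        = Real.exp (-(x ^ 2 / 2)) * (Real.exp E - 1) := by ring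
    rw [e1, abs_mul, abs_of_pos (Real.exp_pos _)]
    calc Real.exp (-(x ^ 2 / 2)) * |Real.exp E - 1|
        ≤ Real.exp (-(x ^ 2 / 2)) * (|E| * Real.exp |E|) := by
          gcongr; exact abs_exp_sub_one_le' E
      _ ≤ Real.exp (-(x ^ 2 / 2)) * (C3 * (1 + |x|) ^ 3 / s * Real.exp (x ^ 2 / 4 + C1)) := by
          gcongr
      _ = Real.exp C1 * C3 * ((1 + |x|) ^ 6 * Real.exp (-(1 / 4 * x ^ 2)))
            / ((1 + |x|) ^ 3 * s) := by
          have : Real.exp (-(1 / 4 * x ^ 2)) = Real.exp (-(x ^ 2 / 2)) * Real.exp (x ^ 2 / 4) := by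
            rw [← Real.exp_add]; congr 1; ring
          rw [this, Real.exp_add]
          have : 1 + |x| ≠ 0 := by positivity
          field_simp
      _ ≤ Real.exp C1 * C3 * C4 / ((1 + |x|) ^ 3 * s) := by gcongr; exact hdec4 x
      _ ≤ _ := by gcongr; linarith
  · have hyI : m + y ∈ Set.Icc (-1 : ℝ) 1 := by
      rw [← hmk, Set.mem_Icc, le_div_iff₀ hn', div_le_iff₀ hn']
      constructor <;> linarith
    have hg := hgap (m + y) hyI (by simpa using hfar.le)
    have hy2 : |y| ≤ 2 := by
      rw [abs_le]; constructor <;> linarith [hyI.1, hyI.2, hm.1, hm.2]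
    have hx1 : 1 + |x| ≤ (1 + 2 * q) * s := by
      rw [hxa]
      have : q * s * |y| ≤ q * s * 2 := by gcongr
      nlinarith
    have hw : wgt K J m n k ≤ Real.exp 2 * n ^ 2 * Real.exp (-(η * n)) := by
      have : Real.exp 2 * (n : ℝ) ^ 2 * Real.exp (-(η * n))
          = Real.exp (-(η * n) + 2 * (1 + Real.log n)) := by
        have e1 : (n : ℝ) ^ 2 = Real.exp (2 * Real.log n) := by
          rw [two_mul, Real.exp_add, Real.exp_log hn', sq]
        rw [e1, ← Real.exp_add, ← Real.exp_add]; congr 1; ring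
      rw [this]
      unfold wgt
      apply Real.exp_le_exp.2
      rw [hmk]
      have b1 := (stirB_mono (midIdx_le hm n)).trans (stirB_le n hn)
      have b2 := (stirB_mono (Nat.sub_le n (midIdx m n))).trans (stirB_le n hn)
      have b3 := stirB_nonneg k
      have b4 := stirB_nonneg (n - k)
      nlinarith
    have hwf : wgt K J m n k ≤ Real.exp 2 * (1 + 2 * q) ^ 3 * C5 / ((1 + |x|) ^ 3 * s) := by
      rw [le_div_iff₀ (by positivity)]
      calc wgt K J m n k * ((1 + |x|) ^ 3 * s)
          ≤ (Real.exp 2 * n ^ 2 * Real.exp (-(η * n))) * (((1 + 2 * q) * s) ^ 3 * s) := by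
            gcongr
        _ = Real.exp 2 * (1 + 2 * q) ^ 3 * ((n : ℝ) ^ 4 * Real.exp (-(η * n))) := by
            have : ((1 + 2 * q) * s) ^ 3 * s = (1 + 2 * q) ^ 3 * (s ^ 2) ^ 2 := by ring
            rw [this, hs2]; ring
        _ ≤ Real.exp 2 * (1 + 2 * q) ^ 3 * ((1 + (n : ℝ)) ^ 4 * Real.exp (-(η * n))) := by
            gcongr; linarith
        _ ≤ _ := by gcongr; exact hdec5 n hn'.le
    have hgf : Real.exp (-(x ^ 2 / 2)) ≤ C6 / (q * δ) / ((1 + |x|) ^ 3 * s) := by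
      have hsx : s ≤ (1 + |x|) / (q * δ) := by
        rw [le_div_iff₀ (by positivity), hxa]
        have : s * (q * δ) ≤ q * s * |y| := by
          calc s * (q * δ) = q * s * δ := by ring
            _ ≤ _ := by gcongr
        linarith
      rw [le_div_iff₀ (by positivity)]
      calc Real.exp (-(x ^ 2 / 2)) * ((1 + |x|) ^ 3 * s)
          ≤ Real.exp (-(x ^ 2 / 2)) * ((1 + |x|) ^ 3 * ((1 + |x|) / (q * δ))) := by gcongr
        _ = ((1 + |x|) ^ 4 * Real.exp (-(1 / 2 * x ^ 2))) / (q * δ) := by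
            have : -(1 / 2 * x ^ 2) = -(x ^ 2 / 2) := by ring
            rw [this]; ring
        _ ≤ _ := by gcongr; exact hdec6 x
    have hwp : 0 < wgt K J m n k := Real.exp_pos _
    calc |wgt K J m n k - Real.exp (-(x ^ 2 / 2))|
        ≤ wgt K J m n k + Real.exp (-(x ^ 2 / 2)) := by
          have := Real.exp_pos (-(x ^ 2 / 2))
          rw [abs_le]; constructor <;> linarith
      _ ≤ Real.exp 2 * (1 + 2 * q) ^ 3 * C5 / ((1 + |x|) ^ 3 * s)
          + C6 / (q * δ) / ((1 + |x|) ^ 3 * s) := add_le_add hwf hgf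
      _ = Cf / ((1 + |x|) ^ 3 * s) := by rw [hCf]; ring
      _ ≤ _ := by gcongr; linarith

/-! ### From point weights to distribution functions -/

/-- The threshold set of an increasing sequence is an initial segment. -/
lemma exists_cut (x : ℕ → ℝ) (hx : StrictMono x) (n : ℕ) (z : ℝ) :
    ∃ j ≤ n + 1, (Finset.range (n + 1)).filter (fun k => x k ≤ z) = Finset.range j ∧
      (∀ k < j, x k ≤ z) ∧ (j ≤ n → z < x j) := by
  classical
  have hex : ∃ j, n < j ∨ z < x j := ⟨n + 1, Or.inl (Nat.lt_succ_self n)⟩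
  have hlow : ∀ k < Nat.find hex, x k ≤ z := by
    intro k hk
    have := Nat.find_min hex hk
    push Not at this
    exact this.2
  have hle : Nat.find hex ≤ n + 1 := Nat.find_min' hex (Or.inl (Nat.lt_succ_self n))
  have hup : Nat.find hex ≤ n → z < x (Nat.find hex) := by
    intro h
    rcases Nat.find_spec hex with h' | h'
    · omega
    · exact h'
  refine ⟨Nat.find hex, hle, ?_, hlow, hup⟩
  ext k
  simp only [Finset.mem_filter, Finset.mem_range]
  constructor
  · rintro ⟨hk, hkz⟩
    by_contra hcon
    push Not at hcon
    have h1 := hup (by omega)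
    have h2 := hx.monotone hcon
    linarith
  · intro hk
    exact ⟨by omega, hlow k hk⟩

/-- If the weights `u k` on the lattice `x k = −α√n + (α+β)k/√n` agree with the Gaussian cell
masses up to `O(n⁻¹ (1+|x k|)⁻³)`, then partial sums of `u` agree with `Φ` at rate `n^{-1/2}`,
non-uniformly. -/
lemma assemble (α β C0 : ℝ) (hα : 0 < α) (hβ : 0 < β) (hC0 : 0 < C0) :
    ∃ C : ℝ, 0 < C ∧ ∀ n : ℕ, 1 ≤ n → ∀ u x : ℕ → ℝ,
      (∀ k, x k = -(α * √n) + (α + β) / √n * k) →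
      (∀ k ≤ n, |u k - (α + β) / √n * stdPDF (x k)| ≤ C0 / (n * (1 + |x k|) ^ 3)) →
      |∑ k ∈ Finset.range (n + 1), u k - 1| ≤ C / √n ∧
      ∀ z : ℝ, |∑ k ∈ (Finset.range (n + 1)).filter (fun k => x k ≤ z), u k
        - stdNormalCDF z * ∑ k ∈ Finset.range (n + 1), u k| ≤ C / ((1 + |z|) * √n) := by
  set τ := α + β with hτ
  have hτ0 : 0 < τ := by positivity
  obtain ⟨Ct, hCt, htl, htr⟩ := stdNormal_tail 5
  obtain ⟨Cc, hCc, hcell⟩ := stdNormal_cell τ hτ0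
  obtain ⟨Cl, hCl, hlip⟩ := stdNormal_lip τ hτ0
  obtain ⟨Cs, hCs, hsum⟩ := lattice_sum τ hτ0
  set B := C0 + Cc * τ ^ 2 + Ct / α ^ 2 + Ct / β ^ 2 with hB
  have hB0 : 0 < B := by positivity
  set C2 := B / τ * Cs with hC2
  have hC20 : 0 < C2 := by positivity
  set C3 := Ct / α + Ct / β + Cl * τ with hC3
  have hC30 : 0 < C3 := by positivity
  refine ⟨C2 + C3 + Ct * C2, by positivity, fun n hn u x hx hu => ?_⟩
  have hn' : (0 : ℝ) < n := by exact_mod_cast hn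
  have hn1 : (1 : ℝ) ≤ n := by exact_mod_cast hn
  have hs2 : (√n) ^ 2 = (n : ℝ) := Real.sq_sqrt hn'.le
  have hs1 : 1 ≤ √(n : ℝ) := by rw [Real.one_le_sqrt]; exact hn1
  set s := √(n : ℝ) with hs
  have hs0 : 0 < s := by linarith
  have hh0 : 0 < τ / s := by positivity
  have hhτ : τ / s ≤ τ := div_le_self hτ0.le hs1
  have hxs : ∀ k, x (k + 1) = x k + τ / s := by
    intro k; rw [hx, hx]; push_cast; ring
  have hmono : StrictMono x := strictMono_nat_of_lt_succ fun k => by rw [hxs]; linarith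
  have hx0 : x 0 = -(α * s) := by rw [hx]; simp
  have hxn : x n = β * s := by
    rw [hx, ← hs2]
    have : τ / s * s ^ 2 = τ * s := by field_simp
    rw [this, hτ]; ring
  -- the distribution function on the lattice, with the outer tails lumped into the end cells
  set Psi : ℕ → ℝ := fun j => if j = 0 then 0 else if j ≤ n then stdNormalCDF (x j) else 1
    with hPsi
  have hbdry : ∀ k ≤ n, |(Psi (k + 1) - Psi k) - (stdNormalCDF (x (k + 1)) - stdNormalCDF (x k))|
      ≤ (Ct / α ^ 2 + Ct / β ^ 2) / (n * (1 + |x k|) ^ 3) := by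
    intro k hk
    have tail5 : ∀ (γ v : ℝ), 0 < γ → |v| = γ * s →
        Ct / (1 + |v|) ^ 5 ≤ Ct / γ ^ 2 / (n * (1 + |v|) ^ 3) := by
      intro γ v hγ hv
      rw [div_div]
      have : γ ^ 2 * (n * (1 + |v|) ^ 3) ≤ (1 + |v|) ^ 5 := by
        have h1 : γ ^ 2 * n ≤ (1 + |v|) ^ 2 := by
          rw [← hs2, ← mul_pow, ← hv]; gcongr; linarith
        calc γ ^ 2 * (n * (1 + |v|) ^ 3) = (γ ^ 2 * n) * (1 + |v|) ^ 3 := by ring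
          _ ≤ (1 + |v|) ^ 2 * (1 + |v|) ^ 3 := by gcongr
          _ = _ := by ring
      gcongr
    rcases Nat.eq_zero_or_pos k with rfl | hk0
    · have e : (Psi (0 + 1) - Psi 0) - (stdNormalCDF (x (0 + 1)) - stdNormalCDF (x 0))
          = stdNormalCDF (x 0) := by
        simp [hPsi, hn]
      rw [e, abs_of_nonneg (stdNormalCDF_nonneg _)]
      have hneg : x 0 ≤ 0 := by rw [hx0]; have := mul_pos hα hs0; linarith
      refine (htl _ hneg).trans ((tail5 α (x 0) hα ?_).trans ?_)
      · rw [hx0, abs_neg, abs_of_pos (by positivity)]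
      · gcongr
        have : 0 < Ct / β ^ 2 := by positivity
        linarith
    · rcases hk.lt_or_eq with hlt | rfl
      · have e : (Psi (k + 1) - Psi k) - (stdNormalCDF (x (k + 1)) - stdNormalCDF (x k)) = 0 := by
          have h1 : k + 1 ≤ n := hlt
          simp [hPsi, h1, hk, hk0.ne']
        rw [e, abs_zero]; positivity
      · have e : (Psi (k + 1) - Psi k) - (stdNormalCDF (x (k + 1)) - stdNormalCDF (x k))
            = 1 - stdNormalCDF (x (k + 1)) := by
          simp [hPsi, hk0.ne']
        have h1 : 1 - stdNormalCDF (x (k + 1)) ≤ 1 - stdNormalCDF (x k) := by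
          have := stdNormalCDF_mono (hmono.monotone (Nat.le_succ k)); linarith
        rw [e, abs_of_nonneg (by linarith [stdNormalCDF_le_one (x (k + 1))])]
        have hpos : 0 ≤ x k := by rw [hxn]; positivity
        refine h1.trans ((htr _ hpos).trans ((tail5 β (x k) hβ ?_).trans ?_))
        · rw [hxn, abs_of_pos (by positivity)]
        · gcongr
          have : 0 < Ct / α ^ 2 := by positivity
          linarith
  have herr : ∀ k ≤ n, |u k - (Psi (k + 1) - Psi k)| ≤ B / (n * (1 + |x k|) ^ 3) := by
    intro k hk
    have h1 := hu k hk
    have h2 := hcell (x k) (τ / s) hh0.le hhτ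
    rw [← hxs] at h2
    have h2' : Cc * (τ / s) ^ 2 / (1 + |x k|) ^ 3 = Cc * τ ^ 2 / (n * (1 + |x k|) ^ 3) := by
      rw [← hs2]; field_simp
    rw [h2'] at h2
    have h3 := hbdry k hk
    have e : u k - (Psi (k + 1) - Psi k) = (u k - τ / s * stdPDF (x k))
        - (stdNormalCDF (x (k + 1)) - stdNormalCDF (x k) - τ / s * stdPDF (x k))
        - ((Psi (k + 1) - Psi k) - (stdNormalCDF (x (k + 1)) - stdNormalCDF (x k))) := by ring
    rw [e]
    refine (abs_sub _ _).trans ((add_le_add (abs_sub _ _) le_rfl).trans ?_)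
    calc _ ≤ C0 / (n * (1 + |x k|) ^ 3) + Cc * τ ^ 2 / (n * (1 + |x k|) ^ 3)
          + (Ct / α ^ 2 + Ct / β ^ 2) / (n * (1 + |x k|) ^ 3) :=
          add_le_add (add_le_add h1 h2) h3
      _ = _ := by rw [hB]; ring
  have hpart : ∀ (A : Finset ℕ) (t : ℝ), A ⊆ Finset.range (n + 1) → 0 < t →
      (∀ k ∈ A, t ≤ 1 + |x k|) →
      |∑ k ∈ A, (u k - (Psi (k + 1) - Psi k))| ≤ C2 / (t * s) := by
    intro A t hA ht hAt
    calc |∑ k ∈ A, (u k - (Psi (k + 1) - Psi k))|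
        ≤ ∑ k ∈ A, |u k - (Psi (k + 1) - Psi k)| := Finset.abs_sum_le_sum_abs _ _
      _ ≤ ∑ k ∈ A, B / τ / (t * s) * (τ / s / (1 + |x k|) ^ 2) := by
          refine Finset.sum_le_sum fun k hk => ?_
          have hkn : k ≤ n := Nat.lt_succ_iff.1 (Finset.mem_range.1 (hA hk))
          refine (herr k hkn).trans ?_
          have e : B / τ / (t * s) * (τ / s / (1 + |x k|) ^ 2)
              = B / (n * (t * (1 + |x k|) ^ 2)) := by
            rw [← hs2]; field_simp
          rw [e]
          have : t * (1 + |x k|) ^ 2 ≤ (1 + |x k|) ^ 3 := by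
            rw [pow_succ' _ 2]; gcongr; exact hAt k hk
          gcongr
      _ ≤ ∑ k ∈ Finset.range (n + 1), B / τ / (t * s) * (τ / s / (1 + |x k|) ^ 2) :=
          Finset.sum_le_sum_of_subset_of_nonneg hA fun k _ _ => by positivity
      _ = B / τ / (t * s) * ∑ k ∈ Finset.range (n + 1), τ / s / (1 + |x k|) ^ 2 := by
          rw [Finset.mul_sum]
      _ ≤ B / τ / (t * s) * Cs := by
          gcongr
          have := hsum (-(α * s)) (τ / s) (n + 1) hh0 hhτ
          simpa only [hx] using this
      _ = _ := by rw [hC2]; ring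
  have hPsi0 : Psi 0 = 0 := by simp [hPsi]
  have hPsin : Psi (n + 1) = 1 := by simp [hPsi]
  set U := ∑ k ∈ Finset.range (n + 1), u k with hU
  have hUe : ∑ k ∈ Finset.range (n + 1), (u k - (Psi (k + 1) - Psi k)) = U - 1 := by
    rw [Finset.sum_sub_distrib, Finset.sum_range_sub, hPsi0, hPsin, sub_zero]
  have hU1 : |U - 1| ≤ C2 / s := by
    have := hpart (Finset.range (n + 1)) 1 le_rfl one_pos
      (fun k _ => by linarith [abs_nonneg (x k)])
    rwa [hUe, one_mul] at this
  refine ⟨hU1.trans ?_, fun z => ?_⟩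
  · gcongr
    have : 0 < Ct * C2 := by positivity
    linarith
  obtain ⟨j, hj, hfilt, hlow, hup⟩ := exists_cut x hmono n z
  have hz1 : 0 < 1 + |z| := by positivity
  have hz1' : 1 ≤ 1 + |z| := by linarith [abs_nonneg z]
  have tail1 : Ct / (1 + |z|) ^ 5 ≤ Ct / (1 + |z|) := by
    gcongr; exact le_self_pow₀ hz1' (by norm_num)
  have tail2 : ∀ γ : ℝ, 0 < γ → γ * s ≤ |z| → Ct / (1 + |z|) ^ 5 ≤ Ct / γ / ((1 + |z|) * s) := by
    intro γ hγ h
    rw [div_div]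
    have : γ * ((1 + |z|) * s) ≤ (1 + |z|) ^ 5 := by
      calc γ * ((1 + |z|) * s) = (γ * s) * (1 + |z|) := by ring
        _ ≤ (1 + |z|) * (1 + |z|) := by gcongr; linarith
        _ = (1 + |z|) ^ 2 := by ring
        _ ≤ _ := pow_le_pow_right₀ hz1' (by norm_num)
    gcongr
  have hPz : |Psi j - stdNormalCDF z| ≤ C3 / ((1 + |z|) * s) := by
    have p1 : 0 < Ct / α := by positivity
    have p2 : 0 < Ct / β := by positivity
    have p3 : 0 < Cl * τ := by positivity
    rcases Nat.eq_zero_or_pos j with rfl | hj0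
    · have hzx : z < -(α * s) := by rw [← hx0]; exact hup (Nat.zero_le n)
      have hz0 : z ≤ 0 := by have := mul_pos hα hs0; linarith
      rw [hPsi0, zero_sub, abs_neg, abs_of_nonneg (stdNormalCDF_nonneg z)]
      refine (htl z hz0).trans ((tail2 α hα ?_).trans ?_)
      · rw [abs_of_nonpos hz0]; linarith
      · gcongr; linarith
    · rcases hj.lt_or_eq with hlt | rfl
      · have hjn : j ≤ n := Nat.lt_succ_iff.1 hlt
        have e : Psi j = stdNormalCDF (x j) := by simp [hPsi, hjn, hj0.ne']
        have h1 := hup hjn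
        have h2 := hlow (j - 1) (by omega)
        have h3 := hxs (j - 1)
        rw [Nat.sub_add_cancel hj0] at h3
        have h4 := hlip z (x j - z) (by linarith) (by linarith)
        rw [add_sub_cancel] at h4
        rw [e]
        calc _ ≤ Cl * (x j - z) / (1 + |z|) := h4
          _ ≤ Cl * (τ / s) / (1 + |z|) := by gcongr; linarith
          _ = Cl * τ / ((1 + |z|) * s) := by field_simp
          _ ≤ _ := by gcongr; linarith
      · have hzx : β * s ≤ z := by rw [← hxn]; exact hlow n (Nat.lt_succ_self n)
        have hz0 : 0 ≤ z := le_trans (by positivity) hzx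
        rw [hPsin, abs_of_nonneg (by linarith [stdNormalCDF_le_one z])]
        refine (htr z hz0).trans ((tail2 β hβ ?_).trans ?_)
        · rw [abs_of_nonneg hz0]; exact hzx
        · gcongr; linarith
  have hBe : ∑ k ∈ (Finset.range (n + 1)).filter (fun k => x k ≤ z),
      (u k - (Psi (k + 1) - Psi k))
      = ∑ k ∈ (Finset.range (n + 1)).filter (fun k => x k ≤ z), u k - Psi j := by
    rw [Finset.sum_sub_distrib]
    congr 1
    rw [hfilt, Finset.sum_range_sub, hPsi0, sub_zero]
  set FB := ∑ k ∈ (Finset.range (n + 1)).filter (fun k => x k ≤ z), u k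
  have final : ∀ T : ℝ, |T| ≤ Ct / (1 + |z|) → ∀ R : ℝ, |R| ≤ C2 / ((1 + |z|) * s) →
      FB - stdNormalCDF z * U = R + (Psi j - stdNormalCDF z) - T * (U - 1) →
      |FB - stdNormalCDF z * U| ≤ (C2 + C3 + Ct * C2) / ((1 + |z|) * s) := by
    intro T hT R hR he
    rw [he]
    have hTU : |T * (U - 1)| ≤ Ct * C2 / ((1 + |z|) * s) := by
      rw [abs_mul]
      calc _ ≤ Ct / (1 + |z|) * (C2 / s) := by gcongr
        _ = _ := by field_simp
    refine (abs_sub _ _).trans ((add_le_add (abs_add_le _ _) le_rfl).trans ?_)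
    rw [add_div, add_div]
    linarith
  rcases lt_or_ge z 0 with hz | hz
  · refine final (stdNormalCDF z) ?_ (FB - Psi j) ?_ (by ring)
    · rw [abs_of_nonneg (stdNormalCDF_nonneg z)]
      exact (htl z hz.le).trans tail1
    · rw [← hBe]
      refine hpart _ _ (Finset.filter_subset _ _) hz1 fun k hk => ?_
      have := (Finset.mem_filter.1 hk).2
      rw [abs_of_neg hz, abs_of_neg (by linarith)]; linarith
  · refine final (-(1 - stdNormalCDF z)) ?_ (FB - Psi j - (U - 1)) ?_ (by ring)
    · rw [abs_neg, abs_of_nonneg (by linarith [stdNormalCDF_le_one z])]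
      exact (htr z hz).trans tail1
    · rw [← hBe, ← hUe, ← Finset.sum_filter_add_sum_filter_not (Finset.range (n + 1))
        (fun k => x k ≤ z) (fun k => u k - (Psi (k + 1) - Psi k)), sub_add_cancel_left, abs_neg]
      refine hpart _ _ (Finset.filter_subset _ _) hz1 fun k hk => ?_
      have := (Finset.mem_filter.1 hk).2
      push Not at this
      rw [abs_of_nonneg hz, abs_of_pos (by linarith)]; linarith

/-! ### The law of the total magnetization -/

lemma totalMag_eq (n : ℕ) (x : Fin n → Bool) :
    totalMag n x = 2 * ((Finset.univ.filter fun i => x i = true).card : ℝ) - n := by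
  unfold totalMag spin
  have : ∀ i, (if x i = true then (1 : ℝ) else -1) = 2 * (if x i = true then 1 else 0) - 1 := by
    intro i; split_ifs <;> norm_num
  simp_rw [this]
  rw [Finset.sum_sub_distrib, ← Finset.mul_sum, Finset.sum_boole]
  simp

lemma cubicProb_eq_s9 (n : ℕ) (K J : ℝ) (s : Set (Fin n → Bool)) [DecidablePred (· ∈ s)] :
    cubicProb n K J s = (∑ x : Fin n → Bool, if x ∈ s then cubicWeight n K J x else 0)
      / ∑ x : Fin n → Bool, cubicWeight n K J x := by
  have hw : ∀ x, 0 ≤ cubicWeight n K J x := fun x => (Real.exp_pos _).le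
  have hZ : ∑ x : Fin n → Bool, ENNReal.ofReal (cubicWeight n K J x)
      = ENNReal.ofReal (∑ x : Fin n → Bool, cubicWeight n K J x) :=
    (ENNReal.ofReal_sum_of_nonneg fun x _ => hw x).symm
  have hS : (∑ x : Fin n → Bool, ENNReal.ofReal (cubicWeight n K J x) • Measure.dirac x) s
      = ENNReal.ofReal (∑ x : Fin n → Bool, if x ∈ s then cubicWeight n K J x else 0) := by
    rw [ENNReal.ofReal_sum_of_nonneg (fun x _ => by split_ifs; exacts [hw x, le_rfl]),
      Measure.finsetSum_apply]
    refine Finset.sum_congr rfl fun x _ => ?_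
    rw [Measure.smul_apply, Measure.dirac_apply' _ (Set.toFinite s).measurableSet]
    by_cases hx : x ∈ s <;> simp [hx]
  unfold cubicProb cubicMeasure
  rw [Measure.smul_apply, hS, hZ, smul_eq_mul, ENNReal.toReal_mul, ENNReal.toReal_inv,
    ENNReal.toReal_ofReal (Finset.sum_nonneg fun x _ => hw x),
    ENNReal.toReal_ofReal (Finset.sum_nonneg fun x _ => by split_ifs; exacts [hw x, le_rfl])]
  ring

/-- The distribution function of the normalized magnetization as a ratio of sums of `wgt`. -/
lemma cubicProb_eq_wgt (K J m D : ℝ) (n : ℕ) (hn : 1 ≤ n) (z : ℝ) :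
    cubicProb n K J {x | (totalMag n x - n * m) / √(n / D) ≤ z}
      = (∑ k ∈ (Finset.range (n + 1)).filter
          (fun k : ℕ => (2 * (k : ℝ) - n - n * m) / √(n / D) ≤ z), wgt K J m n k)
        / ∑ k ∈ Finset.range (n + 1), wgt K J m n k := by
  classical
  set f : ℝ → ℝ := fun S => Real.exp (n * (K / 3 * (S / n) ^ 3 + J / 2 * (S / n) ^ 2)) with hf
  -- the factor by which the unnormalized point probabilities differ from `wgt`
  set A := Real.exp (-(n * phiKJ K J m)
    + (stirB n - stirB (midIdx m n) - stirB (n - midIdx m n))) with hA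
  have hA0 : A ≠ 0 := (Real.exp_pos _).ne'
  have hk : ∀ k ∈ Finset.range (n + 1),
      (n.choose k : ℝ) * f (2 * k - n) = A * wgt K J m n k := by
    intro k hk
    rw [choose_eq_exp n k hn (Nat.lt_succ_iff.1 (Finset.mem_range.1 hk)), hf, hA, wgt,
      ← Real.exp_add, ← Real.exp_add]
    congr 1
    unfold phiKJ
    ring
  have hden : ∑ x : Fin n → Bool, cubicWeight n K J x
      = A * ∑ k ∈ Finset.range (n + 1), wgt K J m n k := by
    rw [Finset.mul_sum, ← Finset.sum_congr rfl hk, ← sum_config]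
    rfl
  have hnum : (∑ x : Fin n → Bool,
      if x ∈ {x : Fin n → Bool | (totalMag n x - n * m) / √(n / D) ≤ z}
        then cubicWeight n K J x else 0)
      = A * ∑ k ∈ (Finset.range (n + 1)).filter
          (fun k : ℕ => (2 * (k : ℝ) - n - n * m) / √(n / D) ≤ z), wgt K J m n k := by
    have := sum_config n (fun S => if (S - n * m) / √(n / D) ≤ z then f S else 0)
    rw [Finset.mul_sum, Finset.sum_filter]
    refine Eq.trans ?_ (this.trans ?_)
    · rfl
    · refine Finset.sum_congr rfl fun k hk' => ?_
      rw [mul_ite, mul_zero, hk k hk']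
  rw [cubicProb_eq_s9, hnum, hden, mul_div_mul_left _ _ hA0]

/-- A positive sequence converging to `1` at rate `n^{-1/2}` is bounded below. -/
lemma exists_lower_bound (U : ℕ → ℝ) (C : ℝ) (hC : 0 < C) (hpos : ∀ n, 0 < U n)
    (hU : ∀ n : ℕ, 1 ≤ n → |U n - 1| ≤ C / √n) : ∃ c : ℝ, 0 < c ∧ ∀ n : ℕ, 1 ≤ n → c ≤ U n := by
  obtain ⟨N, hN⟩ := exists_nat_gt ((2 * C) ^ 2)
  obtain ⟨i, _, hi⟩ := Finset.exists_min_image (Finset.range (N + 1)) U ⟨0, by simp⟩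
  refine ⟨min (1 / 2) (U i), lt_min (by norm_num) (hpos i), fun n hn => ?_⟩
  rcases le_or_gt n N with h | h
  · exact (min_le_right _ _).trans (hi n (Finset.mem_range.2 (by omega)))
  · refine (min_le_left _ _).trans ?_
    have h1 : (2 * C) ^ 2 ≤ (n : ℝ) := by
      have : (N : ℝ) ≤ n := by exact_mod_cast h.le
      linarith
    have h2 : 2 * C ≤ √(n : ℝ) := Real.le_sqrt_of_sq_le h1
    have h3 : C / √(n : ℝ) ≤ 1 / 2 := by
      rw [div_le_iff₀ (by linarith)]; linarith
    have := abs_le.1 ((hU n hn).trans h3)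
    linarith [this.1]

/-- Non-uniform Berry–Esseen bound for the rescaled magnetization
`W_n = (S_n − n m*)/√(n/φ''(m*))` of the cubic Curie–Weiss model, when `φ_{K,J}`
has a unique minimizer `m*` in `(−1,1)` with `φ''_{K,J}(m*) > 0`:
`|P_{n,K,J}(W_n ≤ z) − Φ(z)| ≤ c/((1+|z|)√n)` for all `z`. -/
theorem stmt_9 (K J : ℝ) (hK : 0 < K) (mstar : ℝ)
    (hmem : mstar ∈ Set.Ioo (-1 : ℝ) 1)
    (hmin : ∀ y ∈ Set.Icc (-1 : ℝ) 1, phiKJ K J mstar ≤ phiKJ K J y)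
    (huniq : ∀ y ∈ Set.Icc (-1 : ℝ) 1, phiKJ K J y = phiKJ K J mstar → y = mstar)
    (hconv : 0 < iteratedDeriv 2 (phiKJ K J) mstar) :
    ∃ c : ℝ, 0 < c ∧ ∀ n : ℕ, 1 ≤ n → ∀ z : ℝ,
      |cubicProb n K J
          {x | (totalMag n x - n * mstar) /
                Real.sqrt (n / iteratedDeriv 2 (phiKJ K J) mstar) ≤ z}
        - stdNormalCDF z| ≤ c / ((1 + |z|) * Real.sqrt n) := by
  obtain ⟨C0, hC0, hclose⟩ := wgt_close K J mstar hmem hmin huniq hconv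
  generalize iteratedDeriv 2 (phiKJ K J) mstar = D at *
  have hq0 : 0 < √D := Real.sqrt_pos.2 hconv
  have hα : 0 < √D * (1 + mstar) := mul_pos hq0 (by linarith [hmem.1])
  have hβ : 0 < √D * (1 - mstar) := mul_pos hq0 (by linarith [hmem.2])
  have hτ : √D * (1 + mstar) + √D * (1 - mstar) = 2 * √D := by ring
  have hr0 : 0 < (√(2 * Real.pi))⁻¹ := by positivity
  set r := (√(2 * Real.pi))⁻¹ with hr
  obtain ⟨C, hC, hass⟩ := assemble _ _ (2 * √D * r * C0) hα hβ (by positivity)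
  rw [hτ] at hass
  -- `2√D/√n` is the lattice spacing of the normalized magnetization
  set u : ℕ → ℕ → ℝ := fun n k => 2 * √D / √n * r * wgt K J mstar n k with hu
  have hmain : ∀ n : ℕ, 1 ≤ n →
      |∑ k ∈ Finset.range (n + 1), u n k - 1| ≤ C / √n ∧
      ∀ z : ℝ, |∑ k ∈ (Finset.range (n + 1)).filter
          (fun k : ℕ => (2 * (k : ℝ) - n - n * mstar) / √(n / D) ≤ z), u n k
        - stdNormalCDF z * ∑ k ∈ Finset.range (n + 1), u n k| ≤ C / ((1 + |z|) * √n) := by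
    intro n hn
    have hn' : (0 : ℝ) < n := by exact_mod_cast hn
    have hs2 : (√n) ^ 2 = (n : ℝ) := Real.sq_sqrt hn'.le
    have hs0 : 0 < √(n : ℝ) := Real.sqrt_pos.2 hn'
    refine hass n hn (u n) (fun k : ℕ => (2 * (k : ℝ) - n - n * mstar) / √(n / D)) ?_ ?_
    · intro k
      rw [normalized_eq hconv hn]
      have : (2 * (k : ℝ) - n) / n = 2 * k / (√n) ^ 2 - 1 := by
        rw [hs2]; field_simp
      rw [this]
      field_simp
      ring
    · intro k hk
      have h := hclose n k hn hk _ rfl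
      generalize (2 * (k : ℝ) - n - n * mstar) / √(n / D) = x at *
      have e : u n k - 2 * √D / √n * stdPDF x
          = 2 * √D / √n * r * (wgt K J mstar n k - Real.exp (-(x ^ 2 / 2))) := by
        simp only [hu, stdPDF, ← hr]; ring
      rw [e, abs_mul, abs_of_pos (by positivity)]
      calc _ ≤ 2 * √D / √n * r * (C0 / ((1 + |x|) ^ 3 * √n)) := by gcongr
        _ = 2 * √D * r * C0 / ((√n) ^ 2 * (1 + |x|) ^ 3) := by field_simp
        _ = _ := by rw [hs2]
  have hwpos : ∀ n k, 0 < wgt K J mstar n k := fun n k => Real.exp_pos _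
  -- at `n = 0` division by `√0` makes `u 0` vanish, so the sum is replaced by `1` there
  obtain ⟨c, hc, hcU⟩ := exists_lower_bound
    (fun n => if 1 ≤ n then ∑ k ∈ Finset.range (n + 1), u n k else 1) C hC
    (fun n => by
      split_ifs with hn
      · have hn' : (0 : ℝ) < n := by exact_mod_cast hn
        refine Finset.sum_pos (fun k _ => ?_) ⟨0, by simp⟩
        have := hwpos n k
        have hs0 : 0 < √(n : ℝ) := Real.sqrt_pos.2 hn'
        simp only [hu]
        positivity
      · exact one_pos)
    (fun n hn => by simp only [hn, if_true]; exact (hmain n hn).1)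
  refine ⟨C / c, by positivity, fun n hn z => ?_⟩
  have hn' : (0 : ℝ) < n := by exact_mod_cast hn
  have hs0 : 0 < √(n : ℝ) := Real.sqrt_pos.2 hn'
  have hU := hcU n hn
  simp only [hn, if_true] at hU
  have hb := (hmain n hn).2 z
  have hfac : 2 * √D / √(n : ℝ) * r ≠ 0 := by positivity
  have hP : cubicProb n K J {x | (totalMag n x - n * mstar) / √(n / D) ≤ z}
      = (∑ k ∈ (Finset.range (n + 1)).filter
          (fun k : ℕ => (2 * (k : ℝ) - n - n * mstar) / √(n / D) ≤ z), u n k)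
        / ∑ k ∈ Finset.range (n + 1), u n k := by
    rw [cubicProb_eq_wgt K J mstar D n hn z]
    simp only [hu]
    rw [← Finset.mul_sum, ← Finset.mul_sum, mul_div_mul_left _ _ hfac]
  rw [hP]
  generalize (∑ k ∈ (Finset.range (n + 1)).filter
          (fun k : ℕ => (2 * (k : ℝ) - n - n * mstar) / √(n / D) ≤ z), u n k) = FB at *
  generalize ∑ k ∈ Finset.range (n + 1), u n k = U at *
  have hU0 : 0 < U := lt_of_lt_of_le hc hU
  have e : FB / U - stdNormalCDF z = (FB - stdNormalCDF z * U) / U := by field_simp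
  rw [e, abs_div, abs_of_pos hU0]
  calc _ ≤ C / ((1 + |z|) * √n) / c := by gcongr
    _ = _ := by field_simp
end
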